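/- arXiv:0905.4879 — 4 statements merged into one kernel-verified Lean document; each statement's English description precedes it below -/
import Mathlib

section
/- Let F be a weighted marked graph over R with no free loops and with an unlooped, unmarked vertex a. Then the elements α'(a_m) = contr₁, β'(a) = contr₂ and α'(a) = contr₃ · d^{−1} of R have the universal property of Theorem pjoin for F and a: for every weighted marked graph H with V(F) ∩ V(H) = {a}, with a unlooped and unmarked in H, and such that no neighbor of a in H is marked, [F ∗ H] = [H'] + [H'_m], where H' is obtained from H by changing the weights of a to α'(a) and β'(a), and H'_m is obtained from H by marking a and changing its weights to α'(a_m) and 0. -/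
/-!
For `T = T_F ∪ T_H`, the matrix `𝒜(F ∗ H)_T` consists of the diagonal blocks `A = 𝒜(F - a)_{T_F}`
and `B = 𝒜(H - a)_{T_H}`, joined by the rank-one blocks `κ σᵀ` and `σ κᵀ`, where `κ` and `σ`
record the adjacencies to `a` in `F` and in `H`. Everything follows from two computations of its
nullity (`WMG.nul_blk_of_mem` and `WMG.nul_blk_of_notMem`):

* if `κ = A x`, put `c = xᵀ A x`; a shear shows the nullity to be `ν(A) + ν(B - c σ σᵀ)`;
* if `κ` is not in the column space of `A`, the nullity is `ν(A) - 1 + ν(B')`, where `B'` is `B`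
  bordered by `σ` with corner `0`.

Applied with `B` a `1 × 1` matrix, the same formulas determine the nullities of the two bordered
matrices of `F`, and show that `T_F` is of type 1, 2 or 3 according as `κ = A x` with `c = 0`,
`κ = A x` with `c = 1`, or `κ` is not in the column space of `A`. In these three cases
`ν(𝒜(F ∗ H)_T)` is respectively

* `ν(A) + ν(B)`, and `B` is the matrix of `H` with `a` marked and `a ∉ T_H`;
* `ν(A) + ν(B - σ σᵀ)`, and `B - σ σᵀ` is the Schur complement of the corner of `B` bordered by `σ`
  with corner `1`, the matrix of `H` for `T_H ∪ {a}` with `a` unmarked;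
* `ν(A) - 1 + ν(B')`, and `B'` is the matrix of `H` for `T_H` with `a` unmarked.

Summing over `T_F` for fixed `T_H` turns these into the three weights of `a`.
-/


/-- A weighted marked graph over `R` with vertex type `V`: a symmetric adjacency
matrix over `GF(2)` (diagonal entries record loops), a finite set of marked
vertices, weight functions `alpha` and `beta`, and a number `phi` of free loops. -/
structure WMG (R : Type*) (V : Type*) where
  adj : Matrix V V (ZMod 2)
  symm : adj.IsSymm
  marked : Finset V
  alpha : V → R
  beta : V → R
  phi : ℕ

namespace WMG

variable {R : Type*} {V : Type*}

/-- The matrix `𝒜(G)` with the diagonal entries at vertices of `T` toggled. -/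
def adjT [DecidableEq V] (G : WMG R V) (T : Finset V) : Matrix V V (ZMod 2) :=
  Matrix.of fun i j => G.adj i j + if i = j ∧ i ∈ T then 1 else 0

/-- The vertices whose rows and columns survive in `𝒜(G)_T`: all vertices except
marked ones whose toggled diagonal entry is `0`. -/
def keep [Fintype V] [DecidableEq V] (G : WMG R V) (T : Finset V) : Finset V :=
  Finset.univ.filter fun x => ¬(x ∈ G.marked ∧ G.adjT T x x = 0)

/-- The `GF(2)`-nullity of `𝒜(G)_T` (number of columns minus rank). -/
noncomputable def nullity [Fintype V] [DecidableEq V] (G : WMG R V) (T : Finset V) : ℕ :=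
  Fintype.card {x // x ∈ G.keep T} -
    ((G.adjT T).submatrix (fun i : {x // x ∈ G.keep T} => i.1)
      (fun j : {x // x ∈ G.keep T} => j.1)).rank

/-- The weighted marked-graph bracket polynomial
`[G] = d^φ · Σ_T (∏_{v ∉ T} α v) (∏_{t ∈ T} β t) d^{ν(𝒜(G)_T)}`. -/
noncomputable def bracket [CommRing R] [Fintype V] [DecidableEq V]
    (G : WMG R V) (d : Rˣ) : R :=
  (d : R) ^ G.phi *
    ∑ T : Finset V,
      (∏ x ∈ Tᶜ, G.alpha x) * (∏ t ∈ T, G.beta t) * (d : R) ^ G.nullity T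

/-- Deletion of a set `S` of vertices (with all incident edges); all other data
unchanged. -/
def delete [DecidableEq V] (G : WMG R V) (S : Finset V) : WMG R {x : V // x ∉ S} where
  adj := G.adj.submatrix Subtype.val Subtype.val
  symm := G.symm.submatrix Subtype.val
  marked := G.marked.subtype fun x => x ∉ S
  alpha := fun x => G.alpha x.1
  beta := fun x => G.beta x.1
  phi := G.phi

/-- Change the weights of the vertex `a` to `x` and `y`. -/
def reweight [DecidableEq V] (G : WMG R V) (a : V) (x y : R) : WMG R V :=
  { G with alpha := Function.update G.alpha a x, beta := Function.update G.beta a y }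

/-- Mark the vertex `a` and change its weights to `x` and `y`. -/
def markReweight [DecidableEq V] (G : WMG R V) (a : V) (x y : R) : WMG R V :=
  { G with marked := insert a G.marked,
           alpha := Function.update G.alpha a x,
           beta := Function.update G.beta a y }

/-- The composition `F ∗ H` of two weighted marked graphs along the vertices
`aF` and `aH` (thought of as a single shared vertex `a`): the vertex set is the
disjoint union of `V(F) \ {a}` and `V(H) \ {a}`; loops, marks and weights are
inherited; two vertices are adjacent iff they are adjacent in `F`, or in `H`,
or one is a neighbor of `a` in `F` and the other is a neighbor of `a` in `H`;
free loops add. -/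
def comp {VF VH : Type*} [DecidableEq VF] [DecidableEq VH]
    (F : WMG R VF) (H : WMG R VH) (aF : VF) (aH : VH) :
    WMG R ({x : VF // x ≠ aF} ⊕ {y : VH // y ≠ aH}) where
  adj := Matrix.of fun p q =>
    match p, q with
    | Sum.inl x, Sum.inl x' => F.adj x.1 x'.1
    | Sum.inl x, Sum.inr y => F.adj x.1 aF * H.adj aH y.1
    | Sum.inr y, Sum.inl x => F.adj x.1 aF * H.adj aH y.1
    | Sum.inr y, Sum.inr y' => H.adj y.1 y'.1
  symm := by
    refine Matrix.ext fun p q => ?_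
    rcases p with x | y <;> rcases q with x' | y'
    · exact F.symm.apply x.1 x'.1
    · rfl
    · rfl
    · exact H.symm.apply y.1 y'.1
  marked := (F.marked.subtype fun x => x ≠ aF).disjSum (H.marked.subtype fun y => y ≠ aH)
  alpha := Sum.elim (fun x => F.alpha x.1) (fun y => H.alpha y.1)
  beta := Sum.elim (fun x => F.beta x.1) (fun y => H.beta y.1)
  phi := F.phi + H.phi

/-- The universal property of Theorem `pjoin` for `F` and `a`, with candidate
weights `A = α'(a)`, `B = β'(a)`, `Am = α'(a_m)`: for every weighted marked
graph `H` sharing exactly the unlooped unmarked vertex `a` with `F`, in which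
no neighbor of `a` is marked, `[F ∗ H] = [H'] + [H'_m]`. -/
def UnivProp {R : Type*} [CommRing R] {VF : Type u_v} [Fintype VF] [DecidableEq VF]
    (d : Rˣ) (F : WMG R VF) (a : VF) (A B Am : R) : Prop :=
  ∀ (VH : Type u_v) [Fintype VH] [DecidableEq VH] (H : WMG R VH) (aH : VH),
    H.adj aH aH = 0 → aH ∉ H.marked →
    (∀ y : VH, H.adj aH y = 1 → y ∉ H.marked) →
    (F.comp H a aH).bracket d =
      (H.reweight aH A B).bracket d + (H.markReweight aH Am 0).bracket d

/-- The local complement `G^v`: toggle all entries of the adjacency matrix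
(including diagonal ones) between members of the open neighborhood of `v`. -/
def localComp [DecidableEq V] (G : WMG R V) (v : V) : WMG R V where
  adj := Matrix.of fun a b =>
    G.adj a b + if (a ≠ v ∧ G.adj v a = 1) ∧ (b ≠ v ∧ G.adj v b = 1) then 1 else 0
  symm := by
    refine Matrix.ext fun a b => ?_
    have h : ((b ≠ v ∧ G.adj v b = 1) ∧ (a ≠ v ∧ G.adj v a = 1)) ↔
        ((a ≠ v ∧ G.adj v a = 1) ∧ (b ≠ v ∧ G.adj v b = 1)) := and_comm
    simp only [Matrix.transpose_apply, Matrix.of_apply]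
    rw [G.symm.apply a b, if_congr h rfl rfl]
  marked := G.marked
  alpha := G.alpha
  beta := G.beta
  phi := G.phi

/-- The condition for the pivot `G^{vw}` to toggle the adjacency between `a`
and `b`: `a` and `b` are distinct and (in one order or the other) `a ∈ N(v)`,
`b ∈ N(w)`, and `a ∉ N(w)` or `b ∉ N(v)`. -/
def pivCond [DecidableEq V] (G : WMG R V) (v w a b : V) : Prop :=
  a ≠ b ∧
    (((a ≠ v ∧ G.adj v a = 1) ∧ (b ≠ w ∧ G.adj w b = 1) ∧
        (¬(a ≠ w ∧ G.adj w a = 1) ∨ ¬(b ≠ v ∧ G.adj v b = 1))) ∨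
     ((b ≠ v ∧ G.adj v b = 1) ∧ (a ≠ w ∧ G.adj w a = 1) ∧
        (¬(b ≠ w ∧ G.adj w b = 1) ∨ ¬(a ≠ v ∧ G.adj v a = 1))))

instance pivCond_decidable [DecidableEq V] (G : WMG R V) (v w a b : V) :
    Decidable (pivCond G v w a b) := by
  unfold pivCond; infer_instance

lemma pivCond_comm [DecidableEq V] (G : WMG R V) (v w a b : V) :
    pivCond G v w a b ↔ pivCond G v w b a := by
  unfold pivCond
  constructor <;> rintro ⟨h1, h2⟩ <;> exact ⟨Ne.symm h1, h2.symm⟩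

/-- The pivot `G^{vw}`. -/
def pivot [DecidableEq V] (G : WMG R V) (v w : V) : WMG R V where
  adj := Matrix.of fun a b => G.adj a b + if pivCond G v w a b then 1 else 0
  symm := by
    refine Matrix.ext fun a b => ?_
    simp only [Matrix.transpose_apply, Matrix.of_apply]
    rw [G.symm.apply a b, if_congr (pivCond_comm G v w b a) rfl rfl]
  marked := G.marked
  alpha := G.alpha
  beta := G.beta
  phi := G.phi

/-- The marked pivot `G_c^{vw}`: perform the pivot `G^{vw}`, then interchange
the neighborhoods of `v` and `w` (leaving loops unchanged) and toggle the
marks on `v` and `w`. -/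
def markedPivot [DecidableEq V] (G : WMG R V) (v w : V) : WMG R V where
  adj := Matrix.of fun a b =>
    if a = b then (G.pivot v w).adj a b
    else (G.pivot v w).adj (Equiv.swap v w a) (Equiv.swap v w b)
  symm := by
    refine Matrix.ext fun a b => ?_
    simp only [Matrix.transpose_apply, Matrix.of_apply]
    by_cases h : a = b
    · subst h; simp
    · rw [if_neg fun hh => h hh.symm, if_neg h]
      exact (G.pivot v w).symm.apply _ _
  marked := (G.marked \ {v, w}) ∪ (({v, w} : Finset V) \ G.marked)
  alpha := G.alpha
  beta := G.beta
  phi := G.phi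

/-- The bordered version of `𝒜(F − a)_T`: adjoin the row and column recording
adjacency to `a` in `F`, with corner entry `c`; `borderedNullity` is its
`GF(2)`-nullity. -/
noncomputable def borderedNullity {VF : Type*} [Fintype VF] [DecidableEq VF]
    (F : WMG R VF) (a : VF) (T : Finset {x : VF // x ∉ ({a} : Finset VF)})
    (c : ZMod 2) : ℕ :=
  Fintype.card (Option {x // x ∈ (F.delete {a}).keep T}) -
    (Matrix.of (fun p q =>
      match p, q with
      | some i, some j => (F.delete {a}).adjT T i.1 j.1
      | some i, none => F.adj i.1.1 a
      | none, some j => F.adj j.1.1 a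
      | none, none => c) :
      Matrix (Option {x // x ∈ (F.delete {a}).keep T})
        (Option {x // x ∈ (F.delete {a}).keep T}) (ZMod 2)).rank

end WMG


/-- `T` is of type 1 when the nullity of the bordered matrix with corner entry `0`
is the largest of the three nullities. -/
def WMG.isType1 {R : Type*} {VF : Type*} [Fintype VF] [DecidableEq VF]
    (F : WMG R VF) (a : VF) (T : Finset {x : VF // x ∉ ({a} : Finset VF)}) : Prop :=
  WMG.borderedNullity F a T 0 > WMG.borderedNullity F a T 1 ∧
    WMG.borderedNullity F a T 0 > (F.delete {a}).nullity T

/-- `T` is of type 2 when the nullity of the bordered matrix with corner entry `1`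
is the largest of the three nullities. -/
def WMG.isType2 {R : Type*} {VF : Type*} [Fintype VF] [DecidableEq VF]
    (F : WMG R VF) (a : VF) (T : Finset {x : VF // x ∉ ({a} : Finset VF)}) : Prop :=
  WMG.borderedNullity F a T 1 > WMG.borderedNullity F a T 0 ∧
    WMG.borderedNullity F a T 1 > (F.delete {a}).nullity T

/-- `T` is of type 3 when the nullity of `𝒜(F − a)_T` itself is the largest of the
three nullities. -/
def WMG.isType3 {R : Type*} {VF : Type*} [Fintype VF] [DecidableEq VF]
    (F : WMG R VF) (a : VF) (T : Finset {x : VF // x ∉ ({a} : Finset VF)}) : Prop :=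
  (F.delete {a}).nullity T > WMG.borderedNullity F a T 0 ∧
    (F.delete {a}).nullity T > WMG.borderedNullity F a T 1

/-- `contr_i`: the total contribution to `[F − a]` of the subsets of type `i`. -/
noncomputable def WMG.contr {R : Type*} [CommRing R] (d : Rˣ) {VF : Type*}
    [Fintype VF] [DecidableEq VF] (F : WMG R VF) (a : VF)
    (P : Finset {x : VF // x ∉ ({a} : Finset VF)} → Prop) [DecidablePred P] : R :=
  ∑ T : Finset {x : VF // x ∉ ({a} : Finset VF)},
    if P T then
      (∏ x ∈ Tᶜ, (F.delete {a}).alpha x) * (∏ t ∈ T, (F.delete {a}).beta t) *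
        (d : R) ^ (F.delete {a}).nullity T
    else 0

namespace WMG
open Matrix

/-! ### Nullities of block matrices -/

/-- The nullity of a square matrix over a field: the dimension of its kernel. -/
noncomputable def nul {K ι : Type*} [Field K] [Fintype ι] (M : Matrix ι ι K) : ℕ :=
  Module.finrank K (LinearMap.ker M.mulVecLin)

section LinearAlgebra
variable {K : Type*} [Field K] {m n : Type*} [Fintype m] [Fintype n]

lemma nul_eq_card_sub_rank (M : Matrix m m K) : nul M = Fintype.card m - M.rank := by
  have h := LinearMap.finrank_range_add_finrank_ker M.mulVecLin
  rw [Module.finrank_fintype_fun_eq_card] at h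
  unfold nul Matrix.rank
  omega

/-- The block matrix with diagonal blocks `A`, `B` and with off-diagonal blocks the rank-one
matrices `κ σᵀ` and `σ κᵀ`. Taking one of the index types to be `Unit`, with vector `1`,
gives the matrices bordered by a row and a column. -/
def blk (A : Matrix m m K) (κ : m → K) (σ : n → K) (B : Matrix n n K) :
    Matrix (m ⊕ n) (m ⊕ n) K :=
  Matrix.fromBlocks A (vecMulVec κ σ) (vecMulVec σ κ) B

lemma mem_ker_blk {A : Matrix m m K} {κ : m → K} {σ : n → K} {B : Matrix n n K}
    (v : m ⊕ n → K) :
    v ∈ LinearMap.ker (blk A κ σ B).mulVecLin ↔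
      A *ᵥ (v ∘ Sum.inl) + (σ ⬝ᵥ (v ∘ Sum.inr)) • κ = 0 ∧
      (κ ⬝ᵥ (v ∘ Sum.inl)) • σ + B *ᵥ (v ∘ Sum.inr) = 0 := by
  rw [LinearMap.mem_ker, mulVecLin_apply, blk, fromBlocks_mulVec, vecMulVec_mulVec,
    vecMulVec_mulVec]
  simp only [op_smul_eq_smul]
  constructor
  · intro h
    exact ⟨funext fun i => congrFun h (Sum.inl i), funext fun i => congrFun h (Sum.inr i)⟩
  · rintro ⟨h1, h2⟩
    rw [h1, h2]
    ext (i | i) <;> rfl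

/-- If `κ = A x`, the shear `(u, w) ↦ (u + (σ · w) x, w)` carries the kernel of `blk A κ σ B`
onto the product of the kernels of `A` and of `B - (xᵀ A x) σ σᵀ`. -/
lemma nul_blk_of_mem {A : Matrix m m K} (hA : A.IsSymm) (x : m → K) (σ : n → K)
    (B : Matrix n n K) :
    nul (blk A (A *ᵥ x) σ B) = nul A + nul (B - (x ⬝ᵥ A *ᵥ x) • vecMulVec σ σ) := by
  have hd : ∀ u, A *ᵥ x ⬝ᵥ u = x ⬝ᵥ A *ᵥ u := by
    intro u
    rw [dotProduct_mulVec, ← mulVec_transpose, hA]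
  have hB : ∀ w, (B - (x ⬝ᵥ A *ᵥ x) • vecMulVec σ σ) *ᵥ w =
      B *ᵥ w - ((x ⬝ᵥ A *ᵥ x) * (σ ⬝ᵥ w)) • σ := by
    intro w
    rw [sub_mulVec, smul_mulVec, vecMulVec_mulVec, op_smul_eq_smul, smul_smul]
  unfold nul
  rw [← Module.finrank_prod]
  refine LinearEquiv.finrank_eq (R := K)
    { toFun := fun v => (⟨v.1 ∘ Sum.inl + (σ ⬝ᵥ (v.1 ∘ Sum.inr)) • x, ?_⟩,
        ⟨v.1 ∘ Sum.inr, ?_⟩)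
      invFun := fun p => ⟨Sum.elim (p.1.1 - (σ ⬝ᵥ p.2.1) • x) p.2.1, ?_⟩
      map_add' := ?_, map_smul' := ?_, left_inv := ?_, right_inv := ?_ }
  · have h := ((mem_ker_blk v.1).1 v.2).1
    rw [LinearMap.mem_ker, mulVecLin_apply, mulVec_add, mulVec_smul]
    exact h
  · obtain ⟨h1, h2⟩ := (mem_ker_blk v.1).1 v.2
    rw [LinearMap.mem_ker, mulVecLin_apply, hB, ← h2, hd, eq_neg_of_add_eq_zero_left h1,
      dotProduct_neg, dotProduct_smul]
    ext i
    simp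
    ring
  · intro u v
    ext i
    · simp [Pi.add_comp, dotProduct_add]
      ring
    · simp
  · intro c v
    ext i
    · simp [Pi.smul_comp]
      ring
    · simp
  · have h1 : A *ᵥ p.1.1 = 0 := p.1.2
    have h2 := p.2.2
    rw [LinearMap.mem_ker, mulVecLin_apply, hB] at h2
    refine (mem_ker_blk _).2 ⟨?_, ?_⟩
    · simp [mulVec_sub, mulVec_smul, h1]
    · simp only [Sum.elim_comp_inl, Sum.elim_comp_inr]
      rw [hd, mulVec_sub, mulVec_smul, h1, ← h2]
      ext i
      simp
      ring
  · intro v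
    ext (i | i) <;> simp
  · intro p
    ext i <;> simp

/-- For symmetric `A`, a vector outside the column space of `A` is detected by a vector of the
kernel of `A`. -/
lemma exists_dual_vec {A : Matrix m m K} (hA : A.IsSymm) {κ : m → K}
    (hκ : ¬ ∃ x, A *ᵥ x = κ) : ∃ y, A *ᵥ y = 0 ∧ κ ⬝ᵥ y = 1 := by
  classical
  have h : κ ∉ LinearMap.range A.mulVecLin := by simpa using hκ
  obtain ⟨f, hf, hr⟩ := Submodule.exists_le_ker_of_notMem h
  obtain ⟨y, rfl⟩ := (dotProductEquiv K m).surjective f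
  have hy : y ⬝ᵥ κ ≠ 0 := hf
  have hAy : A *ᵥ y = 0 := by
    refine dotProduct_eq_zero _ fun w => ?_
    have : y ⬝ᵥ A *ᵥ w = 0 := hr ⟨w, rfl⟩
    rwa [dotProduct_mulVec, ← mulVec_transpose, hA] at this
  refine ⟨(y ⬝ᵥ κ)⁻¹ • y, by rw [mulVec_smul, hAy, smul_zero], ?_⟩
  rw [dotProduct_smul, dotProduct_comm κ, smul_eq_mul, inv_mul_cancel₀ hy]

/-- If `κ` is not in the column space of `A`, every `(u, w)` in the kernel of `blk A κ σ B` has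
`A u = 0` and `σ · w = 0`. The left side is therefore the dimension of
`ker (blk A κ σ B) × K`, which is carried onto `ker A × ker (blk 0 1 σ B)` by
`((u, w), s) ↦ (u + (s - κ · u) y, (κ · u, w))`, where `A y = 0` and `κ · y = 1`. -/
lemma nul_blk_of_notMem {A : Matrix m m K} (hA : A.IsSymm) {κ : m → K}
    (hκ : ¬ ∃ x, A *ᵥ x = κ) (σ : n → K) (B : Matrix n n K) :
    nul (blk A κ σ B) + 1 = nul A + nul (blk (0 : Matrix Unit Unit K) 1 σ B) := by
  obtain ⟨y, hAy, hy⟩ := exists_dual_vec hA hκ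
  have key : ∀ v ∈ LinearMap.ker (blk A κ σ B).mulVecLin,
      A *ᵥ (v ∘ Sum.inl) = 0 ∧ σ ⬝ᵥ (v ∘ Sum.inr) = 0 := by
    intro v hv
    have h1 := ((mem_ker_blk v).1 hv).1
    have h2 : σ ⬝ᵥ (v ∘ Sum.inr) = 0 := by
      have := congrArg (fun z => y ⬝ᵥ z) h1
      simpa [dotProduct_add, dotProduct_mulVec, ← mulVec_transpose, hA.eq, hAy,
        dotProduct_comm y κ, hy] using this
    rw [h2, zero_smul, add_zero] at h1
    exact ⟨h1, h2⟩
  unfold nul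
  rw [← Module.finrank_prod, ← Module.finrank_self K, ← Module.finrank_prod]
  refine LinearEquiv.finrank_eq (R := K)
    { toFun := fun v => (⟨v.1.1 ∘ Sum.inl + (v.2 - κ ⬝ᵥ (v.1.1 ∘ Sum.inl)) • y, ?_⟩,
        ⟨Sum.elim (fun _ => κ ⬝ᵥ (v.1.1 ∘ Sum.inl)) (v.1.1 ∘ Sum.inr), ?_⟩)
      invFun := fun p => (⟨Sum.elim (p.1.1 + (p.2.1 (Sum.inl ()) - κ ⬝ᵥ p.1.1) • y)
        (p.2.1 ∘ Sum.inr), ?_⟩, κ ⬝ᵥ p.1.1)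
      map_add' := ?_, map_smul' := ?_, left_inv := ?_, right_inv := ?_ }
  · rw [LinearMap.mem_ker, mulVecLin_apply, mulVec_add, mulVec_smul, hAy, smul_zero,
      (key _ v.1.2).1, add_zero]
  · refine (mem_ker_blk _).2 ⟨?_, ?_⟩
    · simp [(key _ v.1.2).2]
    · have := ((mem_ker_blk v.1.1).1 v.1.2).2
      simpa [dotProduct] using this
  · intro u v
    refine Prod.ext (Subtype.ext (funext fun i => ?_)) (Subtype.ext (funext fun i => ?_))
    · simp [Pi.add_comp, dotProduct_add]
      ring
    · rcases i with i | i <;> simp [Pi.add_comp, dotProduct_add]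
  · intro c v
    refine Prod.ext (Subtype.ext (funext fun i => ?_)) (Subtype.ext (funext fun i => ?_))
    · simp [Pi.smul_comp]
      ring
    · rcases i with i | i <;> simp [Pi.smul_comp]
  · obtain ⟨h1, h2⟩ := (mem_ker_blk _).1 p.2.2
    have h3 : A *ᵥ p.1.1 = 0 := p.1.2
    have h4 : σ ⬝ᵥ (p.2.1 ∘ Sum.inr) = 0 := by simpa using congrFun h1 ()
    refine (mem_ker_blk _).2 ⟨?_, ?_⟩
    · simp [mulVec_add, mulVec_smul, h3, h4, hAy]
    · have h5 : (1 : Unit → K) ⬝ᵥ (p.2.1 ∘ Sum.inl) = p.2.1 (Sum.inl ()) := by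
        simp [dotProduct]
      simpa [dotProduct_add, hy, h5] using h2
  · intro v
    refine Prod.ext (Subtype.ext (funext fun i => ?_)) ?_
    · rcases i with i | i
      · simp [dotProduct_add, hy]
        ring
      · simp
    · simp [dotProduct_add, hy]
  · intro p
    refine Prod.ext (Subtype.ext (funext fun i => ?_)) (Subtype.ext (funext fun i => ?_))
    · simp [dotProduct_add, hy]
      ring
    · rcases i with i | i <;> simp [dotProduct_add, hy]

lemma nul_zero_unit : nul (0 : Matrix Unit Unit K) = 1 := by
  rw [nul_eq_card_sub_rank, rank_zero]
  rfl

lemma nul_unit_of_ne {M : Matrix Unit Unit K} (hM : M () () ≠ 0) : nul M = 0 := by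
  unfold nul
  rw [Submodule.finrank_eq_zero, Submodule.eq_bot_iff]
  intro v hv
  have h1 := congrFun (LinearMap.mem_ker.1 hv) ()
  ext i
  simpa [mulVec, dotProduct, hM] using h1

lemma nul_submatrix (M : Matrix m m K) (e : n ≃ m) : nul (M.submatrix e e) = nul M := by
  rw [nul_eq_card_sub_rank, nul_eq_card_sub_rank, rank_submatrix, Fintype.card_congr e]

lemma nul_blk_one (σ : n → K) (B : Matrix n n K) :
    nul (blk (1 : Matrix Unit Unit K) 1 σ B) = nul (B - vecMulVec σ σ) := by
  have h := nul_blk_of_mem (A := (1 : Matrix Unit Unit K)) isSymm_one 1 σ B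
  rw [nul_unit_of_ne (by simp)] at h
  simpa using h

lemma nul_blk_unit (c : K) :
    nul (blk (0 : Matrix Unit Unit K) 1 (1 : Unit → K) (Matrix.of fun _ _ => c)) = 0 := by
  unfold nul
  rw [Submodule.finrank_eq_zero, Submodule.eq_bot_iff]
  intro v hv
  obtain ⟨h1, h2⟩ := (mem_ker_blk _).1 hv
  have h1 := congrFun h1 ()
  have h2 := congrFun h2 ()
  simp [dotProduct, mulVec] at h1 h2
  rw [h1] at h2
  ext (i | i)
  · simpa using h2
  · simpa using h1

end LinearAlgebra

/-! ### Splitting off a vertex -/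

section Graph
variable {R V : Type*} [Fintype V] [DecidableEq V]

/-- The nullity of `𝒜(G)_T` may be computed with any type `ι` that indexes, without repetition,
the surviving vertices. -/
lemma nullity_eq_nul (G : WMG R V) (T : Finset V) {ι : Type*} [Fintype ι] (f : ι → V)
    (hf : Function.Injective f) (hr : ∀ v, v ∈ G.keep T ↔ ∃ i, f i = v)
    (M : Matrix ι ι (ZMod 2)) (hM : ∀ i j, G.adjT T (f i) (f j) = M i j) :
    G.nullity T = nul M := by
  let e : ι ≃ {x // x ∈ G.keep T} := Equiv.ofBijective
    (fun i => ⟨f i, (hr _).2 ⟨i, rfl⟩⟩)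
    ⟨fun i j h => hf (congrArg Subtype.val h), fun v => by
      obtain ⟨i, hi⟩ := (hr _).1 v.2
      exact ⟨i, Subtype.ext hi⟩⟩
  unfold nullity
  rw [← nul_eq_card_sub_rank, ← nul_submatrix _ e]
  congr 1
  ext i j
  exact hM i j

/-- The vertices other than `a`, encoded as in the vertex type of `G.delete {a}`. -/
abbrev Off (a : V) : Type _ := {x : V // x ∉ ({a} : Finset V)}

/-- A set of vertices other than `a`, seen as a set of vertices. -/
abbrev lift {a : V} (T : Finset (Off a)) : Finset V := T.map (Function.Embedding.subtype _)

lemma notMem_lift {V : Type*} {a : V} (T : Finset (Off a)) : a ∉ lift T := by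
  simp [lift]

lemma coe_mem_lift {V : Type*} {a : V} (T : Finset (Off a)) (x : Off a) : x.1 ∈ lift T ↔ x ∈ T := by
  simp [lift]
  intro _
  simpa using x.2

lemma sum_finset_off {M : Type*} [AddCommMonoid M] (a : V) (f : Finset V → M) :
    ∑ T : Finset V, f T = ∑ T : Finset (Off a), (f (lift T) + f (insert a (lift T))) := by
  have h : ∀ g : Finset V → M, ∑ T ∈ (Finset.univ.erase a).powerset, g T =
      ∑ T : Finset (Off a), g (lift T) := by
    intro g
    refine Finset.sum_nbij' (fun T => T.subtype _) lift ?_ ?_ ?_ ?_ ?_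
    · simp
    · intro T _
      rw [Finset.mem_powerset]
      intro x hx
      refine Finset.mem_erase.2 ⟨fun h => notMem_lift T (h ▸ hx), Finset.mem_univ _⟩
    · intro T hT
      refine Finset.subtype_map_of_mem fun x hx => ?_
      simpa using Finset.mem_powerset.1 hT hx
    · intro T _
      ext x
      rw [Finset.mem_subtype, coe_mem_lift]
    · intro T hT
      congr 1
      refine (Finset.subtype_map_of_mem fun x hx => ?_).symm
      simpa using Finset.mem_powerset.1 hT hx
  rw [← Finset.powerset_univ, ← Finset.insert_erase (Finset.mem_univ a),
    Finset.sum_powerset_insert (Finset.notMem_erase a _), h f, h (fun T => f (insert a T)),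
    Finset.sum_add_distrib]

/-- The product of the weights that the vertices other than `a` contribute to the term of the
bracket indexed by `T` or by `T ∪ {a}`. -/
def wt [CommRing R] (G : WMG R V) (a : V) (T : Finset (Off a)) : R :=
  (∏ x ∈ Tᶜ, G.alpha x.1) * ∏ t ∈ T, G.beta t.1

lemma bracket_eq_sum_off [CommRing R] (G : WMG R V) (d : Rˣ) (a : V) :
    G.bracket d = (d : R) ^ G.phi * ∑ T : Finset (Off a), wt G a T *
      (G.alpha a * (d : R) ^ G.nullity (lift T) +
        G.beta a * (d : R) ^ G.nullity (insert a (lift T))) := by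
  have hc : ∀ T : Finset (Off a), (insert a (lift T))ᶜ = lift Tᶜ := by
    intro T
    ext x
    by_cases hx : x = a
    · subst hx
      simp
    · have := coe_mem_lift T ⟨x, by simpa using hx⟩
      have := coe_mem_lift Tᶜ ⟨x, by simpa using hx⟩
      simp_all
  have hc' : ∀ T : Finset (Off a), (lift T)ᶜ = insert a (lift Tᶜ) := by
    intro T
    rw [← hc, Finset.compl_insert, Finset.insert_erase]
    simp
  unfold bracket
  rw [sum_finset_off a]
  refine congrArg _ (Finset.sum_congr rfl fun T _ => ?_)
  rw [hc, hc', Finset.prod_insert (notMem_lift _), Finset.prod_insert (notMem_lift _),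
    Finset.prod_map, Finset.prod_map, wt]
  simp only [Function.Embedding.subtype_apply]
  ring

/-- The matrix `𝒜(G - a)_T`, indexed by its surviving vertices. -/
abbrev coreMat (G : WMG R V) (a : V) (T : Finset (Off a)) :
    Matrix {x // x ∈ (G.delete {a}).keep T} {x // x ∈ (G.delete {a}).keep T} (ZMod 2) :=
  ((G.delete {a}).adjT T).submatrix Subtype.val Subtype.val

/-- The adjacencies to `a` of the vertices that survive in `𝒜(G - a)_T`. -/
abbrev nbr (G : WMG R V) (a : V) (T : Finset (Off a)) :
    {x // x ∈ (G.delete {a}).keep T} → ZMod 2 := fun x => G.adj x.1.1 a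

lemma coreMat_isSymm (G : WMG R V) (a : V) (T : Finset (Off a)) : (coreMat G a T).IsSymm := by
  refine Matrix.ext fun i j => ?_
  simp only [Matrix.transpose_apply, Matrix.submatrix_apply, adjT, Matrix.of_apply]
  rw [(G.delete {a}).symm.apply]
  congr 2
  by_cases h : i = j
  · rw [h]
  · have : i.1 ≠ j.1 := fun h' => h (Subtype.ext h')
    simp [this, this.symm]

lemma nullity_delete (G : WMG R V) (a : V) (T : Finset (Off a)) :
    (G.delete {a}).nullity T = nul (coreMat G a T) :=
  (nul_eq_card_sub_rank _).symm

lemma borderedNullity_eq (G : WMG R V) (a : V) (T : Finset (Off a)) (c : ZMod 2) :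
    borderedNullity G a T c =
      nul (blk (coreMat G a T) (nbr G a T) (1 : Unit → ZMod 2) (Matrix.of fun _ _ => c)) := by
  rw [borderedNullity, ← nul_eq_card_sub_rank, ← nul_submatrix _ (Equiv.optionEquivSumPUnit _)]
  congr 1
  ext (_ | i) (_ | j) <;>
    simp [blk]

lemma adjT_coe {R V : Type*} [DecidableEq V] (G : WMG R V) (a : V) (T : Finset (Off a)) (S : Finset V)
    (hS : ∀ x : Off a, x.1 ∈ S ↔ x ∈ T) (x y : Off a) :
    G.adjT S x.1 y.1 = (G.delete {a}).adjT T x y := by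
  simp [adjT, delete, hS, Subtype.ext_iff]

lemma coe_mem_keep (G : WMG R V) (a : V) (T : Finset (Off a)) (S : Finset V)
    (hS : ∀ x : Off a, x.1 ∈ S ↔ x ∈ T) (x : Off a) :
    x.1 ∈ G.keep S ↔ x ∈ (G.delete {a}).keep T := by
  simp only [keep, Finset.mem_filter, Finset.mem_univ, true_and, adjT_coe G a T S hS]
  simp [delete]

lemma nullity_of_notMem_keep (G : WMG R V) (a : V) (T : Finset (Off a)) (S : Finset V)
    (hS : ∀ x : Off a, x.1 ∈ S ↔ x ∈ T) (ha : a ∉ G.keep S) :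
    G.nullity S = nul (coreMat G a T) := by
  refine nullity_eq_nul G S (fun i => i.1.1)
    (Subtype.val_injective.comp Subtype.val_injective) (fun v => ?_) _
    fun i j => adjT_coe G a T S hS _ _
  constructor
  · intro hv
    have hva : v ∉ ({a} : Finset V) := fun h => ha (Finset.mem_singleton.1 h ▸ hv)
    exact ⟨⟨⟨v, hva⟩, (coe_mem_keep G a T S hS ⟨v, hva⟩).1 hv⟩, rfl⟩
  · rintro ⟨i, rfl⟩
    exact (coe_mem_keep G a T S hS _).2 i.2

lemma nullity_of_mem_keep (G : WMG R V) (a : V) (T : Finset (Off a)) (S : Finset V)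
    (hS : ∀ x : Off a, x.1 ∈ S ↔ x ∈ T) (ha : a ∈ G.keep S) :
    G.nullity S = nul (blk (Matrix.of fun _ _ : Unit => G.adjT S a a) 1 (nbr G a T)
      (coreMat G a T)) := by
  refine nullity_eq_nul G S (Sum.elim (fun _ => a) (fun i => i.1.1)) ?_ (fun v => ?_) _ ?_
  · rintro (i | i) (j | j) h
    · rfl
    · exact absurd h.symm (by simpa using j.1.2)
    · exact absurd h (by simpa using i.1.2)
    · exact congrArg _ (Subtype.ext (Subtype.ext h))
  · constructor
    · intro hv
      by_cases hva : v ∈ ({a} : Finset V)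
      · exact ⟨Sum.inl (), (Finset.mem_singleton.1 hva).symm⟩
      · exact ⟨Sum.inr ⟨⟨v, hva⟩, (coe_mem_keep G a T S hS ⟨v, hva⟩).1 hv⟩, rfl⟩
    · rintro ⟨i | i, rfl⟩
      · exact ha
      · exact (coe_mem_keep G a T S hS _).2 i.2
  · have hne : ∀ i : Off a, i.1 ≠ a := fun i => by simpa using i.2
    rintro (i | i) (j | j)
    · rfl
    · simp [blk, adjT, (hne j.1).symm, G.symm.apply a]
    · simp [blk, adjT, hne i.1]
    · exact adjT_coe G a T S hS _ _

end Graph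

/-! ### Compositions -/

section Join
variable {R : Type*} {VF VH : Type*} [Fintype VF] [DecidableEq VF] [Fintype VH] [DecidableEq VH]

lemma nullity_congr {G G' : WMG R VH} (h1 : G.adj = G'.adj) (h2 : G.marked = G'.marked)
    (T : Finset VH) : G.nullity T = G'.nullity T := by
  cases G
  cases G'
  subst h1 h2
  rfl

lemma nullity_lift (H : WMG R VH) (b : VH) (hloop : H.adj b b = 0) (hmark : b ∉ H.marked)
    (T : Finset (Off b)) :
    H.nullity (lift T) =
      nul (blk (0 : Matrix Unit Unit (ZMod 2)) 1 (nbr H b T) (coreMat H b T)) := by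
  rw [nullity_of_mem_keep H b T _ (coe_mem_lift T) (by simp [keep, hmark])]
  congr 2
  ext
  simp only [adjT, Matrix.of_apply, hloop]
  simp

lemma nullity_insert_lift (H : WMG R VH) (b : VH) (hloop : H.adj b b = 0) (hmark : b ∉ H.marked)
    (T : Finset (Off b)) :
    H.nullity (insert b (lift T)) =
      nul (blk (1 : Matrix Unit Unit (ZMod 2)) 1 (nbr H b T) (coreMat H b T)) := by
  have hS : ∀ x : Off b, x.1 ∈ insert b (lift T) ↔ x ∈ T := by
    intro x
    have : x.1 ≠ b := by simpa using x.2
    rw [Finset.mem_insert, coe_mem_lift]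
    simp [this]
  rw [nullity_of_mem_keep H b T _ hS (by simp [keep, hmark])]
  congr 2
  ext
  simp [adjT, hloop]

lemma nullity_markReweight_lift (H : WMG R VH) (b : VH) (hloop : H.adj b b = 0) (x y : R)
    (T : Finset (Off b)) :
    (H.markReweight b x y).nullity (lift T) = nul (coreMat H b T) := by
  rw [nullity_of_notMem_keep _ b T _ (coe_mem_lift T), ← nullity_delete, ← nullity_delete]
  · refine nullity_congr (G := (H.markReweight b x y).delete {b}) (G' := H.delete {b}) rfl ?_ T
    ext x
    have : x.1 ≠ b := by simpa using x.2
    simp [delete, markReweight, this]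
  · simp [keep, adjT, markReweight, hloop]

/-- The vertex sets of `F ∗ H` are the unions `T_F ∪ T_H`, with `T_F` and `T_H` sets of vertices
of `F - a` and of `H - a`. -/
def joinEquiv (a : VF) (b : VH) :
    Finset (Off a) × Finset (Off b) ≃ Finset ({x : VF // x ≠ a} ⊕ {y : VH // y ≠ b}) :=
  ((Equiv.subtypeEquivRight (by simp)).finsetCongr.prodCongr
    (Equiv.subtypeEquivRight (by simp)).finsetCongr).trans Finset.sumEquiv.symm.toEquiv

lemma nullity_comp (F : WMG R VF) (H : WMG R VH) (a : VF) (b : VH)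
    (p : Finset (Off a) × Finset (Off b)) :
    (F.comp H a b).nullity (joinEquiv a b p) =
      nul (blk (coreMat F a p.1) (nbr F a p.1) (nbr H b p.2) (coreMat H b p.2)) := by
  have hl : ∀ x : Off a, Sum.inl ⟨x.1, by simpa using x.2⟩ ∈ joinEquiv a b p ↔ x ∈ p.1 := by
    intro x
    simp [joinEquiv, Equiv.subtypeEquivRight, Equiv.subtypeEquiv]
  have hr : ∀ x : Off b, Sum.inr ⟨x.1, by simpa using x.2⟩ ∈ joinEquiv a b p ↔ x ∈ p.2 := by
    intro x
    simp [joinEquiv, Equiv.subtypeEquivRight, Equiv.subtypeEquiv]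
  have hkl : ∀ x : Off a, Sum.inl ⟨x.1, by simpa using x.2⟩ ∈
      (F.comp H a b).keep (joinEquiv a b p) ↔ x ∈ (F.delete {a}).keep p.1 := by
    intro x
    simp [keep, adjT, comp, delete, hl]
  have hkr : ∀ x : Off b, Sum.inr ⟨x.1, by simpa using x.2⟩ ∈
      (F.comp H a b).keep (joinEquiv a b p) ↔ x ∈ (H.delete {b}).keep p.2 := by
    intro x
    simp [keep, adjT, comp, delete, hr]
  refine nullity_eq_nul _ _ (Sum.map (fun i => ⟨i.1.1, by simpa using i.1.2⟩)
    (fun i => ⟨i.1.1, by simpa using i.1.2⟩)) ?_ ?_ _ ?_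
  · refine Function.Injective.sumMap ?_ ?_ <;> intro i j h <;>
      exact Subtype.ext (Subtype.ext (by simpa using h))
  · rintro (⟨v, hv⟩ | ⟨v, hv⟩)
    · rw [hkl ⟨v, by simpa using hv⟩]
      simp [show ¬v = _ from hv]
    · rw [hkr ⟨v, by simpa using hv⟩]
      simp [show ¬v = _ from hv]
  · rintro (i | i) (j | j)
    · change F.adj i.1.1 j.1.1 + (if _ then _ else _) = F.adj i.1.1 j.1.1 + (if _ then _ else _)
      simp only [Sum.map_inl, hl, Sum.inl.injEq, Subtype.ext_iff]
    · simp [blk, adjT, comp, Matrix.vecMulVec_apply, H.symm.apply b]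
    · simp [blk, adjT, comp, Matrix.vecMulVec_apply, H.symm.apply b, mul_comm]
    · change H.adj i.1.1 j.1.1 + (if _ then _ else _) = H.adj i.1.1 j.1.1 + (if _ then _ else _)
      simp only [Sum.map_inr, hr, Sum.inr.injEq, Subtype.ext_iff]

lemma joinEquiv_compl (a : VF) (b : VH) (p : Finset (Off a) × Finset (Off b)) :
    (joinEquiv a b p)ᶜ = joinEquiv a b (p.1ᶜ, p.2ᶜ) := by
  ext (x | x) <;> simp [joinEquiv]

lemma bracket_comp [CommRing R] (F : WMG R VF) (H : WMG R VH) (a : VF) (b : VH) (d : Rˣ)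
    (hphi : F.phi = 0) :
    (F.comp H a b).bracket d = (d : R) ^ H.phi * ∑ TH : Finset (Off b), wt H b TH *
      ∑ TF : Finset (Off a), wt F a TF * (d : R) ^
        nul (blk (coreMat F a TF) (nbr F a TF) (nbr H b TH) (coreMat H b TH)) := by
  have hphi' : (F.comp H a b).phi = H.phi := by simp [comp, hphi]
  unfold bracket
  rw [hphi', ← Equiv.sum_comp (joinEquiv a b), Fintype.sum_prod_type_right]
  refine congrArg _ (Finset.sum_congr rfl fun TH _ => ?_)
  rw [Finset.mul_sum]
  refine Finset.sum_congr rfl fun TF _ => ?_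
  rw [nullity_comp, joinEquiv_compl]
  simp only [joinEquiv, comp, wt, Equiv.trans_apply, Equiv.prodCongr_apply, Prod.map,
    Equiv.finsetCongr_apply, OrderIso.coe_toEquiv, Finset.sumEquiv_symm_apply,
    Finset.prod_disjSum, Finset.prod_map, Sum.elim_inl, Sum.elim_inr]
  simp
  ring

open scoped Classical in
/-- Exactly one summand on the right is nonzero, because `T` has exactly one of the three types.
The term of type 3 carries a factor `d⁻¹` since there the nullity of `𝒜(F - a)_T` exceeds the
other two by one. -/
lemma pow_nul_blk [CommRing R] (F : WMG R VF) (a : VF) (d : Rˣ) (T : Finset (Off a))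
    {n : Type*} [Fintype n] (σ : n → ZMod 2) (B : Matrix n n (ZMod 2)) :
    (d : R) ^ nul (blk (coreMat F a T) (nbr F a T) σ B) =
      (if F.isType3 a T then (d : R) ^ (F.delete {a}).nullity T else 0) * (↑d⁻¹ : R) *
          (d : R) ^ nul (blk (0 : Matrix Unit Unit (ZMod 2)) 1 σ B) +
        (if F.isType2 a T then (d : R) ^ (F.delete {a}).nullity T else 0) *
          (d : R) ^ nul (blk (1 : Matrix Unit Unit (ZMod 2)) 1 σ B) +
        (if F.isType1 a T then (d : R) ^ (F.delete {a}).nullity T else 0) *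
          (d : R) ^ nul B := by
  have hA := coreMat_isSymm F a T
  simp only [isType1, isType2, isType3, nullity_delete, borderedNullity_eq]
  -- The bordered matrices are the case in which the second index type is `Unit` and `σ = 1`.
  by_cases h : ∃ x, coreMat F a T *ᵥ x = nbr F a T
  · obtain ⟨x, hx⟩ := h
    rw [← hx, nul_blk_of_mem hA, nul_blk_of_mem hA, nul_blk_of_mem hA]
    generalize x ⬝ᵥ coreMat F a T *ᵥ x = c
    have h0 : nul ((Matrix.of fun _ _ : Unit => (0 : ZMod 2)) - c • Matrix.vecMulVec 1 1) =
        if c = 0 then 1 else 0 := by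
      split_ifs with hc
      · rw [← nul_zero_unit (K := ZMod 2)]
        congr 1
        ext
        simp [hc]
      · exact nul_unit_of_ne (by simpa using hc)
    have h1 : nul ((Matrix.of fun _ _ : Unit => (1 : ZMod 2)) - c • Matrix.vecMulVec 1 1) =
        if c = 1 then 1 else 0 := by
      split_ifs with hc
      · rw [← nul_zero_unit (K := ZMod 2)]
        congr 1
        ext
        simp [hc]
      · exact nul_unit_of_ne (by simpa [sub_ne_zero] using Ne.symm hc)
    rw [h0, h1, nul_blk_one]
    have hc : c = 0 ∨ c = 1 := by
      clear h0 h1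
      revert c
      decide
    rcases hc with rfl | rfl
    · simp [pow_add]
    · simp [pow_add]
  · have h0 := nul_blk_of_notMem hA h σ B
    have h1 := nul_blk_of_notMem hA h 1 (Matrix.of fun _ _ : Unit => (0 : ZMod 2))
    have h2 := nul_blk_of_notMem hA h 1 (Matrix.of fun _ _ : Unit => (1 : ZMod 2))
    rw [nul_blk_unit, add_zero] at h1 h2
    rw [if_pos (by omega), if_neg (by omega), if_neg (by omega), zero_mul, zero_mul,
      add_zero, add_zero, mul_right_comm, ← pow_add, ← h0, pow_succ, mul_assoc, Units.mul_inv,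
      mul_one]

end Join
end WMG

open scoped Classical in
theorem pjoin_subset_formulas {R : Type*} [CommRing R] (d : Rˣ) {VF : Type}
    [Fintype VF] [DecidableEq VF]
    (F : WMG R VF) (a : VF) (hphi : F.phi = 0)
    (hloop : F.adj a a = 0) (hmark : a ∉ F.marked) :
    WMG.UnivProp d F a (WMG.contr d F a (WMG.isType3 F a) * (↑d⁻¹ : R))
      (WMG.contr d F a (WMG.isType2 F a)) (WMG.contr d F a (WMG.isType1 F a)) := by
  intro VH _ _ H b hHloop hHmark _
  have hcontr : ∀ P : Finset (WMG.Off a) → Prop, WMG.contr d F a P =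
      ∑ T, WMG.wt F a T * if P T then (d : R) ^ (F.delete {a}).nullity T else 0 := by
    intro P
    refine Finset.sum_congr rfl fun T _ => ?_
    rw [mul_ite, mul_zero]
    rfl
  have hw : ∀ x y T, WMG.wt (H.reweight b x y) b T = WMG.wt H b T := by
    intro x y T
    have : ∀ v : WMG.Off b, v.1 ≠ b := fun v => by simpa using v.2
    simp [WMG.wt, WMG.reweight, this]
  have hwm : ∀ x y T, WMG.wt (H.markReweight b x y) b T = WMG.wt H b T := hw
  rw [WMG.bracket_comp F H a b d hphi, WMG.bracket_eq_sum_off _ d b,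
    WMG.bracket_eq_sum_off _ d b]
  simp only [hw, hwm, WMG.nullity_markReweight_lift H b hHloop]
  have h0 : ∀ x y T, (H.reweight b x y).nullity (WMG.lift T) = _ :=
    fun x y T => WMG.nullity_lift H b hHloop hHmark T
  have h1 : ∀ x y T, (H.reweight b x y).nullity (insert b (WMG.lift T)) = _ :=
    fun x y T => WMG.nullity_insert_lift H b hHloop hHmark T
  simp only [h0, h1]
  have hphi1 : ∀ x y, (H.reweight b x y).phi = H.phi := fun _ _ => rfl
  have hphi2 : ∀ x y, (H.markReweight b x y).phi = H.phi := fun _ _ => rfl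
  have ha : ∀ x y, (H.reweight b x y).alpha b = x := fun _ _ => Function.update_self _ _ _
  have hb : ∀ x y, (H.reweight b x y).beta b = y := fun _ _ => Function.update_self _ _ _
  have ham : ∀ x y, (H.markReweight b x y).alpha b = x := fun _ _ => Function.update_self _ _ _
  have hbm : ∀ x y, (H.markReweight b x y).beta b = y := fun _ _ => Function.update_self _ _ _
  simp only [hphi1, hphi2, ha, hb, ham, hbm]
  rw [← mul_add, ← Finset.sum_add_distrib]
  refine congrArg _ (Finset.sum_congr rfl fun TH _ => ?_)
  rw [zero_mul, add_zero, ← mul_add]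
  refine congrArg _ ?_
  simp only [WMG.pow_nul_blk F a d, hcontr, Finset.sum_mul, mul_add, Finset.sum_add_distrib,
    mul_assoc]
end

section
/- Let G be a weighted marked graph over R and let v, w be unlooped twin vertices of G that are both marked and not adjacent to each other. Let (G − w)' be the weighted marked graph obtained from G − w by changing the weights of v to α'(v) = α(v)α(w) + β(v)β(w) and β'(v) = α(v)β(w) + β(v)α(w). Then [G] = [(G − w)']. -/
namespace WMG

/-! ### Nullities as kernel counts -/

/-- The kernel of `𝒜(G)_T`, with vectors on the surviving vertices extended by zero to `V`. -/
def kerSet {R V : Type*} [Fintype V] [DecidableEq V] (G : WMG R V) (T : Finset V) :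
    Set (V → ZMod 2) :=
  {x | (∀ i, i ∉ G.keep T → x i = 0) ∧
    ∀ i, i ∈ G.keep T → (∑ j, G.adj i j * x j) + (if i ∈ T then x i else 0) = 0}

lemma mem_keep {R V : Type*} [Fintype V] [DecidableEq V] (G : WMG R V) (T : Finset V) (i : V) :
    i ∈ G.keep T ↔ ¬(i ∈ G.marked ∧ G.adj i i + (if i ∈ T then 1 else 0) = 0) := by
  simp [keep, adjT]

lemma adjT_row {R V : Type*} [Fintype V] [DecidableEq V] (G : WMG R V) (T : Finset V) (i : V)
    (x : V → ZMod 2) :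
    ∑ j, G.adjT T i j * x j = (∑ j, G.adj i j * x j) + (if i ∈ T then x i else 0) := by
  simp only [adjT, Matrix.of_apply, add_mul, Finset.sum_add_distrib]
  congr 1
  by_cases h : i ∈ T <;> simp [h]

/-- Over `GF(2)` the nullity is determined by the number of kernel vectors, so equality of
nullities follows from a mere bijection of kernels. -/
lemma card_kerSet {R V : Type*} [Fintype V] [DecidableEq V] (G : WMG R V) (T : Finset V) :
    Nat.card (G.kerSet T) = 2 ^ G.nullity T := by
  set M := (G.adjT T).submatrix (fun i : {x // x ∈ G.keep T} => i.1)
      (fun j : {x // x ∈ G.keep T} => j.1) with hM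
  have h1 : G.nullity T = Module.finrank (ZMod 2) (LinearMap.ker M.mulVecLin) := by
    have := LinearMap.finrank_range_add_finrank_ker M.mulVecLin
    rw [Module.finrank_fintype_fun_eq_card] at this
    unfold nullity Matrix.rank
    rw [← hM]
    omega
  have h2 : Nat.card (LinearMap.ker M.mulVecLin) = 2 ^ G.nullity T := by
    rw [h1, Module.natCard_eq_pow_finrank (K := ZMod 2), Nat.card_zmod]
  rw [← h2]
  have hsum : ∀ (i : V) (x : V → ZMod 2), (∀ j, j ∉ G.keep T → x j = 0) →
      ∑ j : {x // x ∈ G.keep T}, G.adjT T i j.1 * x j.1 = ∑ j, G.adjT T i j * x j := by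
    intro i x hx
    rw [Finset.sum_coe_sort (G.keep T) (fun j => G.adjT T i j * x j)]
    apply Finset.sum_subset (Finset.subset_univ _)
    intro j _ hj
    rw [hx j hj, mul_zero]
  refine Nat.card_congr
    { toFun := fun x => ⟨fun i => x.1 i.1, ?_⟩
      invFun := fun y => ⟨fun i => if h : i ∈ G.keep T then y.1 ⟨i, h⟩ else 0, ?_⟩
      left_inv := ?_
      right_inv := ?_ }
  · rw [LinearMap.mem_ker]
    ext i
    have := hsum i.1 x.1 x.2.1
    rw [adjT_row, x.2.2 i.1 i.2] at this
    simpa [Matrix.mulVec, dotProduct, hM] using this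
  · refine ⟨fun i hi => by simp [hi], fun i hi => ?_⟩
    have hy : ∑ j : {x // x ∈ G.keep T}, G.adjT T i j.1 * y.1 j = 0 :=
      congrFun (LinearMap.mem_ker.1 y.2) ⟨i, hi⟩
    rw [← adjT_row G T i (fun i => if h : i ∈ G.keep T then y.1 ⟨i, h⟩ else 0), ← hsum]
    · refine (Finset.sum_congr rfl fun j _ => ?_).trans hy
      rw [dif_pos j.2]
    · intro j hj
      simp [hj]
  · intro x
    ext i
    by_cases h : i ∈ G.keep T
    · simp [h]
    · simp [h, x.2.1 i h]
  · intro y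
    ext i
    simp

lemma nullity_eq_of_equiv {R V W : Type*} [Fintype V] [DecidableEq V] [Fintype W]
    [DecidableEq W] {G : WMG R V} {H : WMG R W} {S : Finset V} {T : Finset W}
    (e : G.kerSet S ≃ H.kerSet T) : G.nullity S = H.nullity T := by
  apply Nat.pow_right_injective (le_refl 2)
  simp only [← card_kerSet]
  exact Nat.card_congr e

/-! ### Deletion of a marked unlooped vertex -/

/-- Deleting a marked unlooped vertex outside `T` does not change the matrix `𝒜(G)_T`. -/
lemma nullity_delete_s7 {R V : Type*} [Fintype V] [DecidableEq V] (G : WMG R V) (w : V)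
    (hw : G.adj w w = 0) (hmw : w ∈ G.marked)
    (G' : WMG R {x : V // x ∉ ({w} : Finset V)})
    (hadj' : G'.adj = (G.delete {w}).adj)
    (hmarked' : ∀ x : {x : V // x ∉ ({w} : Finset V)}, x ∈ G'.marked ↔ (x : V) ∈ G.marked)
    (T : Finset {x : V // x ∉ ({w} : Finset V)}) :
    G'.nullity T = G.nullity (T.map (Function.Embedding.subtype _)) := by
  set S := T.map (Function.Embedding.subtype _) with hS
  have hwS : w ∉ S := by simp [hS]
  have hTS : ∀ i : {x : V // x ∉ ({w} : Finset V)}, i.1 ∈ S ↔ i ∈ T := by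
    intro i
    simp only [hS, Finset.mem_map, Function.Embedding.subtype_apply]
    exact ⟨fun ⟨a, ha, h⟩ => Subtype.ext h ▸ ha, fun h => ⟨i, h, rfl⟩⟩
  have hA : ∀ i j, G'.adj i j = G.adj i.1 j.1 := by
    intro i j
    rw [hadj']
    rfl
  have hwk : w ∉ G.keep S := by simp [mem_keep, hw, hmw, hwS]
  have hk : ∀ i : {x : V // x ∉ ({w} : Finset V)}, i.1 ∈ G.keep S ↔ i ∈ G'.keep T := by
    intro i
    simp only [mem_keep, hmarked', hA, hTS]
  have hsum : ∀ (i : V) (x : V → ZMod 2), x w = 0 →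
      ∑ j : {x : V // x ∉ ({w} : Finset V)}, G.adj i j.1 * x j.1 = ∑ j, G.adj i j * x j := by
    intro i x hx
    rw [← Finset.sum_subtype ({w}ᶜ : Finset V) (by simp) (fun j => G.adj i j * x j)]
    apply Finset.sum_subset (Finset.subset_univ _)
    intro j _ hj
    have : j = w := by simpa using hj
    rw [this, hx, mul_zero]
  symm
  refine nullity_eq_of_equiv
    { toFun := fun x => ⟨fun i => x.1 i.1, ?_, ?_⟩
      invFun := fun y => ⟨fun i => if h : i ∉ ({w} : Finset V) then y.1 ⟨i, h⟩ else 0, ?_, ?_⟩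
      left_inv := ?_
      right_inv := ?_ }
  · intro i hi
    exact x.2.1 i.1 (fun h => hi ((hk i).1 h))
  · intro i hi
    have := x.2.2 i.1 ((hk i).2 hi)
    rw [← hsum _ _ (x.2.1 w hwk)] at this
    simpa only [hA, hTS] using this
  · intro i hi
    beta_reduce
    by_cases h : i ∉ ({w} : Finset V)
    · rw [dif_pos h]
      exact y.2.1 ⟨i, h⟩ (fun h' => hi ((hk ⟨i, h⟩).2 h'))
    · rw [dif_neg h]
  · intro i hi
    have h : i ∉ ({w} : Finset V) := by
      intro h
      exact hwk (Finset.mem_singleton.1 h ▸ hi)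
    have := y.2.2 ⟨i, h⟩ ((hk ⟨i, h⟩).1 hi)
    rw [← hsum _ _ (by simp)]
    beta_reduce
    simp only [hA, ← hTS] at this
    rw [dif_pos h]
    refine Eq.trans ?_ this
    congr 1
    apply Finset.sum_congr rfl
    intro j _
    rw [dif_pos j.2]
  · intro x
    ext i
    by_cases h : i ∉ ({w} : Finset V)
    · simp only [dif_pos h]
    · have : i = w := by simpa using h
      subst this
      simp only [dif_neg h]
      exact (x.2.1 i hwk).symm
  · intro y
    ext i
    simp only [dif_pos i.2]

/-! ### Nullities in the presence of twins -/

lemma twin_adj {R V : Type*} (G : WMG R V) (v w : V) (hloopv : G.adj v v = 0) (hloopw : G.adj w w = 0)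
    (htwin : ∀ x : V, x ≠ v → x ≠ w → G.adj v x = G.adj w x) (hadj : G.adj v w = 0) (i : V) :
    G.adj v i = G.adj w i := by
  by_cases h1 : i = v
  · rw [h1, hloopv, G.symm.apply v w, hadj]
  by_cases h2 : i = w
  · rw [h2, hloopw, hadj]
  exact htwin i h1 h2

section Twins

variable {R V : Type*} [Fintype V] [DecidableEq V] (G : WMG R V) (v w : V)

/-- Vertices with equal rows in `𝒜(G)` are exchanged by an automorphism of `𝒜(G)`, which carries
`insert v S` to `insert w S`. -/
lemma nullity_swap (htw : ∀ i, G.adj v i = G.adj w i) (hmv : v ∈ G.marked) (hmw : w ∈ G.marked)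
    (S : Finset V) (hv : v ∉ S) (hw : w ∉ S) :
    G.nullity (insert v S) = G.nullity (insert w S) := by
  set σ := Equiv.swap v w with hσ
  have htw' : ∀ i, G.adj i v = G.adj i w := by
    intro i
    rw [G.symm.apply v i, G.symm.apply w i, htw]
  have hσ1 : ∀ i j, G.adj (σ i) j = G.adj i j := by
    intro i j
    rcases eq_or_ne i v with rfl | h1
    · rw [hσ, Equiv.swap_apply_left, htw]
    rcases eq_or_ne i w with rfl | h2
    · rw [hσ, Equiv.swap_apply_right, htw]
    rw [hσ, Equiv.swap_apply_of_ne_of_ne h1 h2]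
  have hσ2 : ∀ i j, G.adj i (σ j) = G.adj i j := by
    intro i j
    rw [G.symm.apply (σ j) i, hσ1, G.symm.apply]
  have hT : ∀ i, σ i ∈ insert w S ↔ i ∈ insert v S := by
    intro i
    rcases eq_or_ne i v with rfl | h1
    · simp [hσ]
    rcases eq_or_ne i w with rfl | h2
    · simp [hσ, hv, hw, h1, h1.symm]
    · rw [hσ, Equiv.swap_apply_of_ne_of_ne h1 h2]
      simp [h1, h2]
  have hm : ∀ i, σ i ∈ G.marked ↔ i ∈ G.marked := by
    intro i
    rcases eq_or_ne i v with rfl | h1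
    · simp [hσ, hmv, hmw]
    rcases eq_or_ne i w with rfl | h2
    · simp [hσ, hmv, hmw]
    · rw [hσ, Equiv.swap_apply_of_ne_of_ne h1 h2]
  have hk : ∀ i, σ i ∈ G.keep (insert w S) ↔ i ∈ G.keep (insert v S) := by
    intro i
    simp only [mem_keep, hm, hσ1, hσ2, hT]
  symm
  refine nullity_eq_of_equiv ((σ.arrowCongr (Equiv.refl (ZMod 2))).subtypeEquiv ?_)
  intro x
  have hσσ : ∀ i, σ (σ i) = i := fun i => Equiv.swap_apply_self v w i
  have hx : (σ.arrowCongr (Equiv.refl (ZMod 2))) x = fun i => x (σ i) := by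
    ext i
    simp [hσ, Equiv.arrowCongr]
  have hs : ∀ i, ∑ j, G.adj i j * x (σ j) = ∑ j, G.adj i j * x j := by
    intro i
    rw [← Equiv.sum_comp σ (fun j => G.adj i j * x j)]
    simp only [hσ2]
  rw [hx]
  unfold kerSet
  simp only [Set.mem_ofPred_eq, hs]
  constructor
  · rintro ⟨h1, h2⟩
    refine ⟨fun i hi => h1 _ (fun h => hi ((hk i).1 h)), fun i hi => ?_⟩
    have := h2 _ ((hk i).2 hi)
    simpa only [hσ1, hT] using this
  · rintro ⟨h1, h2⟩
    have hk' : ∀ i, σ i ∈ G.keep (insert v S) ↔ i ∈ G.keep (insert w S) := fun i => by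
      rw [← hk, hσσ]
    have hT' : ∀ i, σ i ∈ insert v S ↔ i ∈ insert w S := fun i => by
      rw [← hT, hσσ]
    refine ⟨fun i hi => ?_, fun i hi => ?_⟩
    · have := h1 (σ i) (fun h => hi ((hk' i).1 h))
      rwa [hσσ] at this
    · have := h2 _ ((hk' i).2 hi)
      simpa only [hσ1, hT', hσσ] using this

/-- When both twins are toggled, they contribute a nonsingular `2 × 2` block: the rows of `v` and
`w` say that `x v = x w = ∑ j, 𝒜 v j * x j`, and these two entries cancel in all other rows. -/
lemma nullity_both (hvw : v ≠ w) (htw : ∀ i, G.adj v i = G.adj w i)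
    (hloopv : G.adj v v = 0) (hmv : v ∈ G.marked) (hmw : w ∈ G.marked)
    (S : Finset V) (hv : v ∉ S) (hw : w ∉ S) :
    G.nullity (insert v (insert w S)) = G.nullity S := by
  have htw' : ∀ i, G.adj i v = G.adj i w := by
    intro i
    rw [G.symm.apply v i, G.symm.apply w i, htw]
  have hloopw : G.adj w w = 0 := by rw [← htw, ← htw', hloopv]
  -- Adding `∑ j, 𝒜 v j * x j` at both twins fixes every row sum, hence is an involution, and it
  -- interchanges the two kernels.
  set φ : (V → ZMod 2) → (V → ZMod 2) := fun x i =>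
    x i + if i = v ∨ i = w then ∑ j, G.adj v j * x j else 0 with hφ
  have hs : ∀ (i : V) (x : V → ZMod 2), ∑ j, G.adj i j * φ x j = ∑ j, G.adj i j * x j := by
    intro i x
    simp only [hφ, mul_add, Finset.sum_add_distrib]
    have : ∑ j, G.adj i j * (if j = v ∨ j = w then ∑ j, G.adj v j * x j else 0) = 0 := by
      rw [← Finset.sum_subset (Finset.subset_univ ({v, w} : Finset V))]
      · rw [Finset.sum_pair hvw]
        simp [htw', CharTwo.add_self_eq_zero]
      · intro j _ hj
        have : ¬(j = v ∨ j = w) := by simpa using hj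
        rw [if_neg this, mul_zero]
    rw [this, add_zero]
  have hinv : Function.Involutive φ := by
    intro x
    ext i
    have : φ (φ x) i = φ x i + if i = v ∨ i = w then ∑ j, G.adj v j * φ x j else 0 := rfl
    rw [this, hs]
    simp only [hφ, add_assoc, CharTwo.add_self_eq_zero, add_zero]
  have hφv : ∀ x, φ x v = x v + ∑ j, G.adj v j * x j := fun x => by simp [hφ]
  have hφw : ∀ x, φ x w = x w + ∑ j, G.adj v j * x j := fun x => by simp [hφ]
  have hφi : ∀ x i, i ≠ v → i ≠ w → φ x i = x i := fun x i h1 h2 => by simp [hφ, h1, h2]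
  have hvk : v ∉ G.keep S := by simp [mem_keep, hloopv, hmv, hv]
  have hwk : w ∉ G.keep S := by simp [mem_keep, hloopw, hmw, hw]
  have hvk' : v ∈ G.keep (insert v (insert w S)) := by simp [mem_keep, hloopv]
  have hwk' : w ∈ G.keep (insert v (insert w S)) := by simp [mem_keep, hloopw]
  have hT : ∀ i, i ≠ v → i ≠ w → (i ∈ insert v (insert w S) ↔ i ∈ S) := by
    intro i h1 h2
    simp [h1, h2]
  have hk : ∀ i, i ≠ v → i ≠ w → (i ∈ G.keep (insert v (insert w S)) ↔ i ∈ G.keep S) := by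
    intro i h1 h2
    simp only [mem_keep, hT i h1 h2]
  symm
  refine nullity_eq_of_equiv ((hinv.toPerm φ).subtypeEquiv ?_)
  intro x
  change x ∈ G.kerSet S ↔ φ x ∈ G.kerSet _
  unfold kerSet
  simp only [Set.mem_ofPred_eq, hs]
  constructor
  · rintro ⟨h1, h2⟩
    refine ⟨fun i hi => ?_, fun i hi => ?_⟩
    · have n1 : i ≠ v := fun h => hi (h ▸ hvk')
      have n2 : i ≠ w := fun h => hi (h ▸ hwk')
      rw [hφi x i n1 n2]
      exact h1 i (fun h => hi ((hk i n1 n2).2 h))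
    · rcases eq_or_ne i v with rfl | n1
      · simp [hφv, h1 _ hvk, CharTwo.add_self_eq_zero]
      rcases eq_or_ne i w with rfl | n2
      · simp [hφw, h1 _ hwk, htw, CharTwo.add_self_eq_zero]
      rw [hφi x i n1 n2]
      simp only [hT i n1 n2]
      exact h2 i ((hk i n1 n2).1 hi)
  · rintro ⟨h1, h2⟩
    refine ⟨fun i hi => ?_, fun i hi => ?_⟩
    · rcases eq_or_ne i v with rfl | n1
      · have := h2 i hvk'
        rw [if_pos (by simp), hφv, add_left_comm, CharTwo.add_self_eq_zero, add_zero] at this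
        exact this
      rcases eq_or_ne i w with rfl | n2
      · have := h2 i hwk'
        simp only [← htw] at this
        rw [if_pos (by simp), hφw, add_left_comm, CharTwo.add_self_eq_zero, add_zero] at this
        exact this
      rw [← hφi x i n1 n2]
      exact h1 i (fun h => hi ((hk i n1 n2).1 h))
    · have n1 : i ≠ v := fun h => hvk (h ▸ hi)
      have n2 : i ≠ w := fun h => hwk (h ▸ hi)
      have := h2 i ((hk i n1 n2).2 hi)
      simpa only [hT i n1 n2, hφi x i n1 n2] using this

end Twins

end WMG

/-! ### Collecting the weights -/

theorem marked_nonadjacent_twins {R : Type*} [CommRing R] (d : Rˣ) {V : Type*} [Fintype V] [DecidableEq V]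
    (G : WMG R V) (v w : V) (hvw : v ≠ w)
    (hloopv : G.adj v v = 0) (hloopw : G.adj w w = 0)
    (htwin : ∀ x : V, x ≠ v → x ≠ w → G.adj v x = G.adj w x)
    (hmv : v ∈ G.marked) (hmw : w ∈ G.marked) (hadj : G.adj v w = 0)
    (G' : WMG R {x : V // x ∉ ({w} : Finset V)})
    (hadj' : G'.adj = (G.delete {w}).adj)
    (hphi' : G'.phi = G.phi)
    (hmarked' : ∀ x : {x : V // x ∉ ({w} : Finset V)}, x ∈ G'.marked ↔ (x : V) ∈ G.marked)
    (halpha' : ∀ x : {x : V // x ∉ ({w} : Finset V)}, G'.alpha x =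
        if (x : V) = v then G.alpha v * G.alpha w + G.beta v * G.beta w else G.alpha x)
    (hbeta' : ∀ x : {x : V // x ∉ ({w} : Finset V)}, G'.beta x =
        if (x : V) = v then G.alpha v * G.beta w + G.beta v * G.alpha w else G.beta x) :
    G.bracket d = G'.bracket d := by
  have htw := WMG.twin_adj G v w hloopv hloopw htwin hadj
  unfold WMG.bracket
  rw [hphi']
  congr 1
  set U : Finset V := Finset.univ \ {v, w} with hU
  have hvU : v ∉ U := by simp [hU]
  have hwU : w ∉ U := by simp [hU]
  have hwvU : w ∉ insert v U := by simp [hU, hvw.symm]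
  have huniv : (Finset.univ : Finset V) = insert w (insert v U) := by
    ext i
    simp only [hU, Finset.mem_univ, Finset.mem_insert, Finset.mem_sdiff, Finset.mem_singleton]
    tauto
  -- The weights of `G'`, as functions on all of `V`.
  set a : V → R := fun x =>
    if x = v then G.alpha v * G.alpha w + G.beta v * G.beta w else G.alpha x with ha
  set b : V → R := fun x =>
    if x = v then G.alpha v * G.beta w + G.beta v * G.alpha w else G.beta x with hb
  have hR : ∑ T : Finset {x : V // x ∉ ({w} : Finset V)},
      (∏ x ∈ Tᶜ, G'.alpha x) * (∏ t ∈ T, G'.beta t) * (d : R) ^ G'.nullity T =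
      ∑ T ∈ (insert v U).powerset,
        (∏ x ∈ insert v U \ T, a x) * (∏ t ∈ T, b t) * (d : R) ^ G.nullity T := by
    refine Finset.sum_bij' (fun T _ => T.map (Function.Embedding.subtype _))
      (fun S _ => S.subtype _) ?_ ?_ ?_ ?_ ?_
    · intro T _
      rw [Finset.mem_powerset]
      intro i hi
      have hne : i ≠ w := by
        rintro rfl
        simp at hi
      have := Finset.mem_univ i
      rw [huniv, Finset.mem_insert] at this
      exact this.resolve_left hne
    · intro S _
      exact Finset.mem_univ _
    · intro T _
      ext i
      simp only [Finset.mem_subtype, Finset.mem_map, Function.Embedding.subtype_apply]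
      exact ⟨fun ⟨c, hc, h⟩ => Subtype.ext h ▸ hc, fun h => ⟨i, h, rfl⟩⟩
    · intro S hS
      rw [Finset.subtype_map, Finset.filter_true_of_mem]
      intro i hi h
      rw [Finset.mem_singleton.1 h] at hi
      exact hwvU (Finset.mem_powerset.1 hS hi)
    · intro T _
      have hc : insert v U \ T.map (Function.Embedding.subtype _) =
          Tᶜ.map (Function.Embedding.subtype _) := by
        ext i
        have hi := Finset.mem_univ i
        rw [huniv, Finset.mem_insert] at hi
        simp only [Finset.mem_sdiff, Finset.mem_map, Function.Embedding.subtype_apply,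
          Finset.mem_compl]
        constructor
        · rintro ⟨h1, h2⟩
          have h3 : i ∉ ({w} : Finset V) := fun h => hwvU (Finset.mem_singleton.1 h ▸ h1)
          exact ⟨⟨i, h3⟩, fun h => h2 ⟨_, h, rfl⟩, rfl⟩
        · rintro ⟨c, h1, rfl⟩
          refine ⟨hi.resolve_left (fun h => c.2 (Finset.mem_singleton.2 h)), ?_⟩
          rintro ⟨c', h2, h3⟩
          exact h1 (Subtype.ext h3 ▸ h2)
      rw [hc, Finset.prod_map, Finset.prod_map,
        WMG.nullity_delete_s7 G w hloopw hmw G' hadj' hmarked' T]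
      congr 2
      · exact Finset.prod_congr rfl fun x _ => halpha' x
      · exact Finset.prod_congr rfl fun x _ => hbeta' x
  rw [hR]
  simp only [Finset.compl_eq_univ_sdiff]
  rw [← Finset.powerset_univ, huniv, Finset.sum_powerset_insert hwvU,
    Finset.sum_powerset_insert hvU, Finset.sum_powerset_insert hvU,
    Finset.sum_powerset_insert hvU, ← Finset.sum_add_distrib, ← Finset.sum_add_distrib,
    ← Finset.sum_add_distrib, ← Finset.sum_add_distrib]
  refine Finset.sum_congr rfl fun S hS => ?_
  have hSU := Finset.mem_powerset.1 hS
  have hvS : v ∉ S := fun h => hvU (hSU h)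
  have hwS : w ∉ S := fun h => hwU (hSU h)
  have hvX : v ∉ U \ S := fun h => hvU (Finset.mem_sdiff.1 h).1
  have hwX : w ∉ U \ S := fun h => hwU (Finset.mem_sdiff.1 h).1
  have e0 : insert w (insert v U) \ S = insert w (insert v (U \ S)) := by
    rw [Finset.insert_sdiff_of_notMem _ hwS, Finset.insert_sdiff_of_notMem _ hvS]
  have e1 : insert w (insert v U) \ insert v S = insert w (U \ S) := by
    ext i; simp only [Finset.mem_sdiff, Finset.mem_insert]; grind
  have e2 : insert w (insert v U) \ insert w S = insert v (U \ S) := by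
    ext i; simp only [Finset.mem_sdiff, Finset.mem_insert]; grind
  have e3 : insert w (insert v U) \ insert w (insert v S) = U \ S := by
    ext i; simp only [Finset.mem_sdiff, Finset.mem_insert]; grind
  have e4 : insert v U \ S = insert v (U \ S) := Finset.insert_sdiff_of_notMem _ hvS
  have e5 : insert v U \ insert v S = U \ S := by
    ext i; simp only [Finset.mem_sdiff, Finset.mem_insert]; grind
  have pa : ∏ x ∈ U \ S, a x = ∏ x ∈ U \ S, G.alpha x :=
    Finset.prod_congr rfl fun x hx => if_neg (ne_of_mem_of_not_mem hx hvX)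
  have pb : ∏ x ∈ S, b x = ∏ x ∈ S, G.beta x :=
    Finset.prod_congr rfl fun x hx => if_neg (ne_of_mem_of_not_mem hx hvS)
  have hav : a v = G.alpha v * G.alpha w + G.beta v * G.beta w := if_pos rfl
  have hbv : b v = G.alpha v * G.beta w + G.beta v * G.alpha w := if_pos rfl
  have hwvX : w ∉ insert v (U \ S) := by simp [hvw.symm, hwX]
  have hwvS : w ∉ insert v S := by simp [hvw.symm, hwS]
  rw [e0, e1, e2, e3, e4, e5, Finset.prod_insert hwvX, Finset.prod_insert hvX,
    Finset.prod_insert hwX, Finset.prod_insert hvX, Finset.prod_insert hvS,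
    Finset.prod_insert hwS, Finset.prod_insert hwvS, Finset.prod_insert hvS,
    Finset.prod_insert hvS, pa, pb, hav, hbv, Finset.insert_comm w v S,
    WMG.nullity_both G v w hvw htw hloopv hmv hmw S hvS hwS,
    ← WMG.nullity_swap G v w htw hmv hmw S hvS hwS]
  ring
end

section
/- Let G be a weighted marked graph over R and let v, w be unlooped twin vertices of G that are both marked and adjacent to each other. Let (G − w)' be the weighted marked graph obtained from G − w by changing the weights of v to α'(v) = α(v)α(w) and β'(v) = α(v)β(w) + β(v)α(w) + β(v)β(w)·d. Then [G] = [(G − w)']. -/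
namespace WMG

/-! ### Rank and nullity under merging of indices -/

/-- Repeating rows and columns of a square matrix does not change its rank. -/
lemma rank_submatrix_of_surjective {m m' : Type*} [Fintype m] [Fintype m']
    (A : Matrix m' m' (ZMod 2)) (f : m → m') (hf : Function.Surjective f) :
    (A.submatrix f f).rank = A.rank := by
  apply le_antisymm
  · exact Matrix.rank_submatrix_le A f f
  · obtain ⟨g, hg⟩ := hf.hasRightInverse
    have h : A = (A.submatrix f f).submatrix g g := by
      ext i j
      simp [hg i, hg j]
    conv_lhs => rw [h]
    exact Matrix.rank_submatrix_le _ g g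

variable {R : Type*} {V : Type*} [Fintype V] [DecidableEq V]

/-- If the surviving vertices of `G` map onto those of `G'` compatibly with the matrix entries,
then the two matrices have the same rank, so the nullities differ as the sizes do. -/
lemma nullity_add_card_of_image_keep {R' V' : Type*} [Fintype V'] [DecidableEq V']
    (G : WMG R V) (G' : WMG R' V') (T : Finset V) (T' : Finset V') (f : V → V')
    (him : (G.keep T).image f = G'.keep T')
    (hent : ∀ i ∈ G.keep T, ∀ j ∈ G.keep T, G.adjT T i j = G'.adjT T' (f i) (f j)) :
    G.nullity T + (G'.keep T').card = G'.nullity T' + (G.keep T).card := by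
  have hmem : ∀ i ∈ G.keep T, f i ∈ G'.keep T' := fun i hi =>
    him ▸ Finset.mem_image_of_mem f hi
  let g : {x // x ∈ G.keep T} → {x // x ∈ G'.keep T'} := fun i => ⟨f i.1, hmem i.1 i.2⟩
  have hg : Function.Surjective g := by
    rintro ⟨y, hy⟩
    rw [← him, Finset.mem_image] at hy
    obtain ⟨x, hx, rfl⟩ := hy
    exact ⟨⟨x, hx⟩, rfl⟩
  have hM : (G.adjT T).submatrix (fun i : {x // x ∈ G.keep T} => i.1)
      (fun j : {x // x ∈ G.keep T} => j.1) =
      ((G'.adjT T').submatrix (fun i : {x // x ∈ G'.keep T'} => i.1)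
      (fun j : {x // x ∈ G'.keep T'} => j.1)).submatrix g g := by
    ext i j
    exact hent i.1 i.2 j.1 j.2
  unfold nullity
  rw [hM, rank_submatrix_of_surjective _ g hg]
  have h1 := rank_submatrix_of_surjective ((G'.adjT T').submatrix
    (fun i : {x // x ∈ G'.keep T'} => i.1) (fun j : {x // x ∈ G'.keep T'} => j.1)) g hg
  have h2 := Matrix.rank_le_card_width ((G'.adjT T').submatrix
    (fun i : {x // x ∈ G'.keep T'} => i.1) (fun j : {x // x ∈ G'.keep T'} => j.1))
  have h3 := Matrix.rank_le_card_width (((G'.adjT T').submatrix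
    (fun i : {x // x ∈ G'.keep T'} => i.1) (fun j : {x // x ∈ G'.keep T'} => j.1)).submatrix g g)
  simp only [Fintype.card_coe] at *
  omega

/-! ### Merging two adjacent marked twins -/

/-- The map `V → V ∖ {w}` that merges the vertex `w` into the vertex `v`. -/
def collapse (v w : V) (hvw : v ≠ w) (x : V) : {x : V // x ∉ ({w} : Finset V)} :=
  if h : x = w then ⟨v, by simpa using hvw⟩ else ⟨x, by simpa using h⟩

lemma collapse_self {V : Type*} [DecidableEq V] (v w : V) (hvw : v ≠ w) :
    (collapse v w hvw w).1 = v := by simp [collapse]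

lemma collapse_of_ne {V : Type*} [DecidableEq V] (v w : V) (hvw : v ≠ w) {x : V} (hx : x ≠ w) :
    (collapse v w hvw x).1 = x := by simp [collapse, hx]

/-- Merging `w` into `v` lowers the nullity by one if both `v` and `w` lie in `T`, and preserves it
otherwise; `T'` is the image of `T` under the merging. -/
lemma nullity_twins (G : WMG R V) (v w : V) (hvw : v ≠ w)
    (hloopv : G.adj v v = 0) (hloopw : G.adj w w = 0)
    (htwin : ∀ x : V, x ≠ v → x ≠ w → G.adj v x = G.adj w x)
    (hmv : v ∈ G.marked) (hmw : w ∈ G.marked) (hadj : G.adj v w = 1)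
    (G' : WMG R {x : V // x ∉ ({w} : Finset V)})
    (hA : ∀ x y, G'.adj x y = G.adj x.1 y.1)
    (hmarked' : ∀ x : {x : V // x ∉ ({w} : Finset V)}, x ∈ G'.marked ↔ (x : V) ∈ G.marked)
    (T : Finset V) (T' : Finset {x : V // x ∉ ({w} : Finset V)})
    (hT : ∀ x : {x : V // x ∉ ({w} : Finset V)}, x.1 ≠ v → (x ∈ T' ↔ x.1 ∈ T))
    (hTv : (⟨v, by simpa using hvw⟩ : {x : V // x ∉ ({w} : Finset V)}) ∈ T' ↔ v ∈ T ∨ w ∈ T) :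
    G.nullity T = G'.nullity T' + if v ∈ T ∧ w ∈ T then 1 else 0 := by
  have hsymm : ∀ i j, G.adj i j = G.adj j i := fun i j => G.symm.apply j i
  have hkv : v ∈ G.keep T ↔ v ∈ T := by
    simp [keep, adjT, hmv, hloopv]
  have hkw : w ∈ G.keep T ↔ w ∈ T := by
    simp [keep, adjT, hmw, hloopw]
  have hkv' : ∀ x : {x : V // x ∉ ({w} : Finset V)}, x.1 = v →
      (x ∈ G'.keep T' ↔ v ∈ T ∨ w ∈ T) := by
    rintro ⟨x, hx⟩ rfl
    simp [keep, adjT, hmarked', hmv, hA, hloopv, hTv]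
    tauto
  have hkx : ∀ x : {x : V // x ∉ ({w} : Finset V)}, x.1 ≠ v →
      (x ∈ G'.keep T' ↔ x.1 ∈ G.keep T) := by
    intro x hx
    simp [keep, adjT, hmarked', hA, hT x hx]
  set f := collapse v w hvw with hf
  have hfw : (f w).1 = v := collapse_self v w hvw
  have hfx : ∀ {x}, x ≠ w → (f x).1 = x := fun hx => collapse_of_ne v w hvw hx
  have hne : ∀ y : {x : V // x ∉ ({w} : Finset V)}, y.1 ≠ w := fun y => by
    simpa using y.2
  have him : (G.keep T).image f = G'.keep T' := by
    ext y
    rw [Finset.mem_image]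
    constructor
    · rintro ⟨x, hx, rfl⟩
      by_cases hxw : x = w
      · subst hxw
        exact (hkv' _ hfw).2 (Or.inr (hkw.1 hx))
      by_cases hxv : x = v
      · subst hxv
        exact (hkv' _ (hfx hxw)).2 (Or.inl (hkv.1 hx))
      · rw [hkx _ (by rwa [hfx hxw]), hfx hxw]
        exact hx
    · intro hy
      by_cases hyv : y.1 = v
      · rcases (hkv' y hyv).1 hy with h | h
        · exact ⟨v, hkv.2 h, Subtype.ext ((hfx hvw).trans hyv.symm)⟩
        · exact ⟨w, hkw.2 h, Subtype.ext (hfw.trans hyv.symm)⟩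
      · exact ⟨y.1, (hkx y hyv).1 hy, Subtype.ext (hfx (hne y))⟩
  have hvT' : ∀ x : {x : V // x ∉ ({w} : Finset V)}, x.1 = v → (v ∈ T ∨ w ∈ T) → x ∈ T' := by
    rintro ⟨x, hx⟩ rfl h
    exact hTv.2 h
  -- The diagonal entries of `v` and `w` are `1` as soon as these vertices survive, which matches
  -- the off-diagonal entry `1` between them.
  have hent : ∀ i ∈ G.keep T, ∀ j ∈ G.keep T, G.adjT T i j = G'.adjT T' (f i) (f j) := by
    intro i hi j hj
    simp only [adjT, Matrix.of_apply, hA, Subtype.ext_iff]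
    by_cases hiw : i = w <;> by_cases hjw : j = w
    · subst hiw; subst hjw
      have := hvT' _ hfw (Or.inr (hkw.1 hi))
      simp [hfw, hloopv, hloopw, this, hkw.1 hi]
    · subst hiw
      have := hvT' _ hfw (Or.inr (hkw.1 hi))
      rw [hfw, hfx hjw]
      by_cases hjv : j = v
      · subst hjv
        simp [hsymm i j, hadj, Ne.symm hjw, hloopv, this]
      · simp [htwin j hjv hjw, Ne.symm hjw, Ne.symm hjv]
    · subst hjw
      rw [hfw, hfx hiw]
      by_cases hiv : i = v
      · subst hiv
        have := hvT' _ (hfx hiw) (Or.inl (hkv.1 hi))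
        simp [hadj, hiw, hloopv, this]
      · simp [hsymm i, htwin i hiv hiw, hiw, hiv]
    · rw [hfx hiw, hfx hjw]
      by_cases hiv : i = v
      · subst hiv
        have := hvT' _ (hfx hiw) (Or.inl (hkv.1 hi))
        simp [hkv.1 hi, this]
      · simp [hT (f i) (by rwa [hfx hiw]), hfx hiw]
  have hmain := nullity_add_card_of_image_keep G G' T T' f him hent
  have hinj : Set.InjOn f ((G.keep T).erase w : Finset V) := by
    intro x hx y hy hxy
    simp only [Finset.coe_erase, Set.mem_sdiff, Set.mem_singleton_iff] at hx hy
    rw [← hfx hx.2, ← hfx hy.2, hxy]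
  have hcard : (G.keep T).card = (G'.keep T').card + if v ∈ T ∧ w ∈ T then 1 else 0 := by
    rw [← him]
    by_cases hw : w ∈ T
    · have hins : insert w ((G.keep T).erase w) = G.keep T := Finset.insert_erase (hkw.2 hw)
      have hcl := Finset.card_image_of_injOn hinj
      have hce := Finset.card_erase_add_one (hkw.2 hw)
      by_cases hv : v ∈ T
      · have : (G.keep T).image f = ((G.keep T).erase w).image f := by
          conv_lhs => rw [← hins]
          rw [Finset.image_insert, Finset.insert_eq_self, Finset.mem_image]
          exact ⟨v, Finset.mem_erase.2 ⟨hvw, hkv.2 hv⟩, Subtype.ext ((hfx hvw).trans hfw.symm)⟩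
        rw [this, hcl, if_pos ⟨hv, hw⟩, hce]
      · have : f w ∉ ((G.keep T).erase w).image f := by
          rw [Finset.mem_image]
          rintro ⟨x, hx, hxw⟩
          have hx' := Finset.mem_erase.1 hx
          have hxv : x = v := by rw [← hfx hx'.1, hxw, hfw]
          exact hv (hkv.1 (hxv ▸ hx'.2))
        rw [if_neg (fun h => hv h.1), ← hins, Finset.image_insert,
          Finset.card_insert_of_notMem this, hcl, hins, hce]
    · have hwk : w ∉ G.keep T := fun h => hw (hkw.1 h)
      rw [Finset.erase_eq_of_notMem hwk] at hinj
      rw [if_neg (fun h => hw h.2), Finset.card_image_of_injOn hinj, add_zero]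
  omega

/-! ### Products and sums over vertex sets -/

/-- The two weight products in a term of the bracket combine to one product over all vertices. -/
lemma weight_prod [CommRing R] (a b : V → R) (T : Finset V) :
    (∏ x ∈ Tᶜ, a x) * (∏ t ∈ T, b t) = ∏ x, if x ∈ T then b x else a x := by
  rw [← Finset.prod_compl_mul_prod T]
  congr 1
  · exact Finset.prod_congr rfl fun x hx => by rw [if_neg (Finset.mem_compl.1 hx)]
  · exact Finset.prod_congr rfl fun x hx => by rw [if_pos hx]

lemma sum_finset_split {M : Type*} [AddCommMonoid M] (a : V) (F : Finset V → M) :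
    ∑ T : Finset V, F T =
      ∑ U ∈ (Finset.univ.erase a).powerset, (F U + F (insert a U)) := by
  rw [Finset.sum_add_distrib, ← Finset.sum_powerset_insert (Finset.notMem_erase a _),
    Finset.insert_erase (Finset.mem_univ a), Finset.powerset_univ]

lemma sum_powerset_erase {M : Type*} [AddCommMonoid M] (w : V) (F : Finset V → M) :
    ∑ U ∈ (Finset.univ.erase w).powerset, F U =
      ∑ U : Finset {x : V // x ∉ ({w} : Finset V)}, F (U.map (Function.Embedding.subtype _)) := by
  symm
  refine Finset.sum_nbij' (fun U => U.map (Function.Embedding.subtype _))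
    (fun U => U.subtype _) ?_ ?_ ?_ ?_ ?_
  · intro U _
    rw [Finset.mem_powerset]
    intro x hx
    simp only [Finset.mem_map, Function.Embedding.subtype_apply] at hx
    obtain ⟨y, -, rfl⟩ := hx
    exact Finset.mem_erase.2 ⟨by simpa using y.2, Finset.mem_univ _⟩
  · simp
  · intro U _
    ext x
    simpa using fun _ => by simpa using x.2
  · intro U hU
    rw [Finset.mem_powerset] at hU
    ext x
    simpa using fun hx => Finset.ne_of_mem_erase (hU hx)
  · simp

end WMG

theorem marked_adjacent_twins {R : Type*} [CommRing R] (d : Rˣ) {V : Type*} [Fintype V] [DecidableEq V]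
    (G : WMG R V) (v w : V) (hvw : v ≠ w)
    (hloopv : G.adj v v = 0) (hloopw : G.adj w w = 0)
    (htwin : ∀ x : V, x ≠ v → x ≠ w → G.adj v x = G.adj w x)
    (hmv : v ∈ G.marked) (hmw : w ∈ G.marked) (hadj : G.adj v w = 1)
    (G' : WMG R {x : V // x ∉ ({w} : Finset V)})
    (hadj' : G'.adj = (G.delete {w}).adj)
    (hphi' : G'.phi = G.phi)
    (hmarked' : ∀ x : {x : V // x ∉ ({w} : Finset V)}, x ∈ G'.marked ↔ (x : V) ∈ G.marked)
    (halpha' : ∀ x : {x : V // x ∉ ({w} : Finset V)}, G'.alpha x =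
        if (x : V) = v then G.alpha v * G.alpha w else G.alpha x)
    (hbeta' : ∀ x : {x : V // x ∉ ({w} : Finset V)}, G'.beta x =
        if (x : V) = v then G.alpha v * G.beta w + G.beta v * G.alpha w + G.beta v * G.beta w * (d : R) else G.beta x) :
    G.bracket d = G'.bracket d := by
  have hA : ∀ x y, G'.adj x y = G.adj x.1 y.1 := by
    intro x y
    rw [hadj']
    rfl
  set v' : {x : V // x ∉ ({w} : Finset V)} := ⟨v, by simpa using hvw⟩ with hv'
  have hne : ∀ y : {x : V // x ∉ ({w} : Finset V)}, y.1 ≠ w := fun y => by simpa using y.2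
  have hnull := WMG.nullity_twins G v w hvw hloopv hloopw htwin hmv hmw hadj G' hA hmarked'
  unfold WMG.bracket
  rw [hphi']
  congr 1
  rw [WMG.sum_finset_split w, WMG.sum_powerset_erase w, WMG.sum_finset_split v',
    WMG.sum_finset_split v' (V := {x : V // x ∉ ({w} : Finset V)})]
  refine Finset.sum_congr rfl fun U hU => ?_
  rw [Finset.mem_powerset] at hU
  have hvU : v' ∉ U := fun h => by simpa using hU h
  simp only [WMG.weight_prod]
  -- Each product splits off the factors at `w` and `v`; the rest `P` depends only on `U`.
  have hsplit : ∀ h : V → R, ∏ x, h x =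
      h w * (h v * ∏ x ∈ Finset.univ.erase v', h x.1) := by
    intro h
    rw [Finset.mul_prod_erase Finset.univ (fun x : {x : V // x ∉ ({w} : Finset V)} => h x.1)
      (Finset.mem_univ v'), ← Finset.mul_prod_erase Finset.univ h (Finset.mem_univ w)]
    congr 1
    exact Finset.prod_subtype _ (by simp) h
  have hmap : ∀ (S : Finset {x : V // x ∉ ({w} : Finset V)}) (x : {x : V // x ∉ ({w} : Finset V)}),
      x.1 ∈ S.map (Function.Embedding.subtype _) ↔ x ∈ S := by
    intro S x
    exact Finset.mem_map' (Function.Embedding.subtype _)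
  have hmapw : ∀ (S : Finset {x : V // x ∉ ({w} : Finset V)}),
      w ∉ S.map (Function.Embedding.subtype _) := by
    intro S
    simp
  have hmapv : ∀ (S : Finset {x : V // x ∉ ({w} : Finset V)}),
      v ∈ S.map (Function.Embedding.subtype _) ↔ v' ∈ S := fun S => hmap S v'
  set P : R := ∏ x ∈ Finset.univ.erase v', if x ∈ U then G.beta x.1 else G.alpha x.1 with hP
  have hprod : ∀ T : Finset V,
      (∀ x : {x : V // x ∉ ({w} : Finset V)}, x ≠ v' → (x.1 ∈ T ↔ x ∈ U)) →
      (∏ x, if x ∈ T then G.beta x else G.alpha x) =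
        (if w ∈ T then G.beta w else G.alpha w) *
          ((if v ∈ T then G.beta v else G.alpha v) * P) := by
    intro T hT
    rw [hsplit]
    congr 2
    refine Finset.prod_congr rfl fun x hx => ?_
    simp only [hT x (Finset.ne_of_mem_erase hx)]
  have hprod' : ∀ T : Finset {x : V // x ∉ ({w} : Finset V)},
      (∀ x : {x : V // x ∉ ({w} : Finset V)}, x ≠ v' → (x ∈ T ↔ x ∈ U)) →
      (∏ x, if x ∈ T then G'.beta x else G'.alpha x) =
        (if v' ∈ T then G'.beta v' else G'.alpha v') * P := by
    intro T hT
    rw [← Finset.mul_prod_erase Finset.univ _ (Finset.mem_univ v')]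
    congr 1
    refine Finset.prod_congr rfl fun x hx => ?_
    have hxv := Finset.ne_of_mem_erase hx
    have hxv1 : x.1 ≠ v := fun h => hxv (Subtype.ext h)
    simp only [hT x hxv, halpha', hbeta', if_neg hxv1]
  have hx1 : ∀ x : {x : V // x ∉ ({w} : Finset V)}, x.1 ≠ v → x ≠ v' :=
    fun x hx h => hx (congrArg Subtype.val h)
  set U₁ := U.map (Function.Embedding.subtype _) with hU₁
  set U₂ := (insert v' U).map (Function.Embedding.subtype _) with hU₂
  have m1 : ∀ x, x.1 ∈ U₁ ↔ x ∈ U := hmap U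
  have m2 : ∀ x, x.1 ∈ U₂ ↔ x = v' ∨ x ∈ U := fun x => by rw [hU₂, hmap, Finset.mem_insert]
  have w1 : w ∉ U₁ := hmapw U
  have w2 : w ∉ U₂ := hmapw _
  have v1 : v ∉ U₁ := by rwa [hU₁, hmapv]
  have v2 : v ∈ U₂ := by rw [hU₂, hmapv]; exact Finset.mem_insert_self _ _
  have n1 : G.nullity U₁ = G'.nullity U := by
    rw [hnull U₁ U (fun x _ => (m1 x).symm) (by simp [← hv', hvU, v1, w1])]
    simp [v1]
  have n2 : G.nullity U₂ = G'.nullity (insert v' U) := by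
    rw [hnull U₂ (insert v' U) (fun x _ => by rw [m2, Finset.mem_insert]) (by simp [← hv', v2])]
    simp [w2]
  have n3 : G.nullity (insert w U₁) = G'.nullity (insert v' U) := by
    rw [hnull (insert w U₁) (insert v' U)
      (fun x hx => by simp [m1, hx1 x hx, hne x]) (by simp [← hv'])]
    simp [v1, hvw]
  have n4 : G.nullity (insert w U₂) = G'.nullity (insert v' U) + 1 := by
    rw [hnull (insert w U₂) (insert v' U)
      (fun x hx => by simp [m2, hne x]) (by simp [← hv'])]
    simp [v2]
  rw [hprod U₁ (fun x _ => m1 x), hprod U₂ (fun x hx => by simp [m2, hx]),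
    hprod (insert w U₁) (fun x hx => by simp [m1, hne x]),
    hprod (insert w U₂) (fun x hx => by simp [m2, hx, hne x]),
    hprod' U (fun x _ => Iff.rfl), hprod' (insert v' U) (fun x hx => by simp [hx]),
    n1, n2, n3, n4, halpha', hbeta']
  have hv'1 : v'.1 = v := rfl
  simp [hv'1, w1, w2, v1, v2, hvU, hvw]
  ring
end

section
/- Let G be a weighted marked graph over R and let v, w be nonadjacent, unlooped twin vertices of G, neither of which is marked. Let (G − w)' be the weighted marked graph obtained from G − w by changing the weights of v to α'(v) = α(v)α(w)·d + α(v)β(w) + β(v)α(w) and β'(v) = 0. Then [G] = [(G − w)'] + β(v)β(w)·[G − v − w]. -/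
namespace WMG

open scoped Matrix

/-! ### Nullities as cardinalities of kernels in `V → ZMod 2` -/

/-- The kernel of a submatrix along an injection `f`, extended by zero to the whole index set, has
`2` to the nullity elements. -/
theorem card_ker_submatrix {V ι : Type*} [Fintype V] [DecidableEq V] [Fintype ι]
    [DecidableEq ι] (M : Matrix V V (ZMod 2)) (f : ι → V) (hf : Function.Injective f) :
    2 ^ (Fintype.card ι - (M.submatrix f f).rank) =
      Nat.card {x : V → ZMod 2 // (∀ i ∉ Set.range f, x i = 0) ∧
        ∀ i ∈ Set.range f, (M *ᵥ x) i = 0} := by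
  have hfr : Fintype.card ι - (M.submatrix f f).rank =
      Module.finrank (ZMod 2) (LinearMap.ker (M.submatrix f f).mulVecLin) := by
    have h := LinearMap.finrank_range_add_finrank_ker (M.submatrix f f).mulVecLin
    rw [Module.finrank_fintype_fun_eq_card] at h
    rw [Matrix.rank]
    omega
  have hcard := Module.natCard_eq_pow_finrank (K := ZMod 2)
    (V := LinearMap.ker (M.submatrix f f).mulVecLin)
  rw [Nat.card_zmod] at hcard
  rw [hfr, ← hcard]
  have hsum : ∀ (x : V → ZMod 2), (∀ i ∉ Set.range f, x i = 0) → ∀ i,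
      (M *ᵥ x) (f i) = (M.submatrix f f *ᵥ (x ∘ f)) i := by
    intro x hx i
    simp only [Matrix.mulVec, dotProduct, Matrix.submatrix_apply, Function.comp]
    exact (Fintype.sum_of_injective f hf _ _ (fun j hj => by rw [hx j hj, mul_zero])
      (fun _ => rfl)).symm
  have hext : ∀ y : ι → ZMod 2, ∀ i ∉ Set.range f, Function.extend f y 0 i = 0 := by
    intro y i hi
    rw [Function.extend_apply' _ _ _ (fun ⟨a, ha⟩ => hi ⟨a, ha⟩)]
    rfl
  have hcomp : ∀ y : ι → ZMod 2, Function.extend f y 0 ∘ f = y := fun y =>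
    funext fun i => hf.extend_apply y 0 i
  refine Nat.card_congr
    { toFun := fun y => ⟨Function.extend f y.1 0, hext y.1, ?_⟩
      invFun := fun x => ⟨x.1 ∘ f, ?_⟩
      left_inv := fun y => Subtype.ext (hcomp y.1)
      right_inv := fun x => Subtype.ext ?_ }
  · rintro _ ⟨i, rfl⟩
    rw [hsum _ (hext y.1), hcomp]
    exact congrFun (LinearMap.mem_ker.mp y.2) i
  · rw [LinearMap.mem_ker]
    funext i
    rw [Matrix.mulVecLin_apply, ← hsum x.1 x.2.1 i]
    exact x.2.2 _ ⟨i, rfl⟩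
  · funext i
    by_cases hi : i ∈ Set.range f
    · obtain ⟨j, rfl⟩ := hi
      exact hf.extend_apply _ _ j
    · exact (hext _ i hi).trans (x.2.1 i hi).symm

variable {R V : Type*} [Fintype V] [DecidableEq V]

/-- The kernel of `𝒜(G − A)_T`, regarded as a set of vectors indexed by all of `V(G)`: the
coordinates of the vertices of `A` and of the vertices removed because of their marks vanish, and
only the equations of the surviving vertices are imposed. -/
def kerOn (G : WMG R V) (A T : Finset V) : Set (V → ZMod 2) :=
  {x | ∀ i, if i ∈ A ∨ (i ∈ G.marked ∧ G.adjT T i i = 0) then x i = 0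
    else (G.adj *ᵥ x) i + (if i ∈ T then x i else 0) = 0}

/-- The nullity of `𝒜(G − A)_T`, recovered from the number of vectors of `kerOn`, which is a
power of `2`. -/
noncomputable def nullOn (G : WMG R V) (A T : Finset V) : ℕ :=
  Nat.log 2 (Nat.card (G.kerOn A T))

theorem adjT_mulVec (G : WMG R V) (T : Finset V) (x : V → ZMod 2) (i : V) :
    (G.adjT T *ᵥ x) i = (G.adj *ᵥ x) i + if i ∈ T then x i else 0 := by
  simp only [Matrix.mulVec, dotProduct, adjT, Matrix.of_apply, add_mul, Finset.sum_add_distrib]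
  congr 1
  by_cases hi : i ∈ T <;> simp [hi]

theorem rank_eq_nullOn {ι : Type*} [Fintype ι] [DecidableEq ι] (G : WMG R V) (A T : Finset V)
    (f : ι → V) (hf : Function.Injective f)
    (hr : ∀ i, i ∈ Set.range f ↔ ¬(i ∈ A ∨ (i ∈ G.marked ∧ G.adjT T i i = 0))) :
    Fintype.card ι - ((G.adjT T).submatrix f f).rank = G.nullOn A T := by
  have h := card_ker_submatrix (G.adjT T) f hf
  have hset : {x : V → ZMod 2 | (∀ i ∉ Set.range f, x i = 0) ∧
      ∀ i ∈ Set.range f, (G.adjT T *ᵥ x) i = 0} = G.kerOn A T := by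
    ext x
    simp only [Set.mem_ofPred_eq, kerOn, hr, adjT_mulVec, not_not]
    rw [← forall_and]
    refine forall_congr' fun i => ?_
    by_cases hi : i ∈ A ∨ (i ∈ G.marked ∧ G.adjT T i i = 0)
    · rw [if_pos hi]
      exact ⟨fun h => h.1 hi, fun h => ⟨fun _ => h, fun h' => absurd hi h'⟩⟩
    · rw [if_neg hi]
      exact ⟨fun h => h.2 hi, fun h => ⟨fun h' => absurd h' hi, fun _ => h⟩⟩
  rw [nullOn, ← hset]
  exact (Nat.log_pow Nat.one_lt_two _).symm.trans (congrArg (Nat.log 2) h)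

theorem nullity_eq_nullOn (G : WMG R V) (T : Finset V) : G.nullity T = G.nullOn ∅ T :=
  rank_eq_nullOn G ∅ T _ Subtype.val_injective (by simp [keep])

omit [Fintype V] in
theorem delete_adjT (G : WMG R V) (A : Finset V) (T : Finset {x // x ∉ A}) :
    (G.delete A).adjT T =
      (G.adjT (T.map (Function.Embedding.subtype _))).submatrix Subtype.val Subtype.val := by
  ext i j
  have hi := i.2
  simp [adjT, delete, Subtype.ext_iff, hi]

theorem nullity_delete_s11 (G : WMG R V) (A : Finset V) (T : Finset {x // x ∉ A}) :
    (G.delete A).nullity T = G.nullOn A (T.map (Function.Embedding.subtype _)) := by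
  rw [nullity, delete_adjT, Matrix.submatrix_submatrix]
  refine rank_eq_nullOn G A _ _ (Subtype.val_injective.comp Subtype.val_injective) fun i => ?_
  rw [not_or]
  constructor
  · rintro ⟨j, rfl⟩
    refine ⟨j.1.2, ?_⟩
    have := j.2
    simp only [keep, Finset.mem_filter, delete_adjT] at this
    simpa [delete, Function.comp] using this.2
  · rintro ⟨h1, h2⟩
    refine ⟨⟨⟨i, h1⟩, ?_⟩, rfl⟩
    simp only [keep, Finset.mem_filter, delete_adjT]
    exact ⟨Finset.mem_univ _, by simpa [delete] using h2⟩

/-! ### Brackets of vertex-deleted graphs -/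

/-- A bracket of a graph that differs from `G − A` in its weights only, as a sum over subsets of
`V(G) \ A`. -/
theorem bracket_of_delete [CommRing R] (d : Rˣ) (G : WMG R V) (A : Finset V)
    (H : WMG R {x : V // x ∉ A}) (a b : V → R)
    (hadj : H.adj = (G.delete A).adj) (hm : H.marked = (G.delete A).marked)
    (ha : ∀ x, H.alpha x = a x.1) (hb : ∀ x, H.beta x = b x.1) :
    H.bracket d = (d : R) ^ H.phi * ∑ S ∈ Aᶜ.powerset,
      (∏ x ∈ Aᶜ \ S, a x) * (∏ x ∈ S, b x) * (d : R) ^ G.nullOn A S := by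
  have hn : ∀ T, H.nullity T = (G.delete A).nullity T := by
    intro T
    obtain ⟨adj, symm, m, α, β, φ⟩ := H
    obtain rfl : adj = _ := hadj
    obtain rfl : m = _ := hm
    rfl
  rw [bracket]
  congr 1
  refine Finset.sum_bij' (fun T _ => T.map (Function.Embedding.subtype _))
    (fun S _ => S.subtype _) ?_ ?_ ?_ ?_ ?_
  · intro T _
    rw [Finset.mem_powerset]
    intro x hx
    obtain ⟨y, -, rfl⟩ := Finset.mem_map.mp hx
    simpa using y.2
  · simp
  · intro T _
    ext x
    have hx := x.2
    simp [hx]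
  · intro S hS
    rw [Finset.subtype_map, Finset.filter_true_of_mem]
    intro x hx
    simpa using Finset.mem_powerset.mp hS hx
  · intro T _
    rw [hn, nullity_delete_s11, Finset.prod_map]
    have : Aᶜ \ T.map (Function.Embedding.subtype _) =
        Tᶜ.map (Function.Embedding.subtype (fun x => x ∉ A)) := by
      ext x
      simp only [Finset.mem_sdiff, Finset.mem_compl, Finset.mem_map,
        Function.Embedding.subtype_apply, Subtype.exists, exists_and_right, exists_eq_right]
      constructor
      · rintro ⟨h1, h2⟩
        exact ⟨h1, fun h => h2 ⟨h1, h⟩⟩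
      · rintro ⟨h1, h2⟩
        exact ⟨h1, fun ⟨_, h⟩ => h2 h⟩
    rw [this, Finset.prod_map]
    simp [ha, hb]

/-! ### Nullities in the presence of twins -/

section Twins

variable (G : WMG R V) (v w : V)

/-- `v` and `w` are distinct, nonadjacent, unlooped, unmarked twins. The twin relation and the
nonadjacency together say that the rows of `v` and `w` in the adjacency matrix coincide. -/
structure Twins : Prop where
  ne : v ≠ w
  row : ∀ x, G.adj v x = G.adj w x
  loop : G.adj v v = 0
  hv : v ∉ G.marked
  hw : w ∉ G.marked

variable {G v w}

omit [Fintype V] [DecidableEq V] in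
theorem Twins.col (h : G.Twins v w) (x : V) : G.adj x v = G.adj x w := by
  rw [← G.symm.apply x v, ← G.symm.apply x w]
  exact h.row x

omit [Fintype V] [DecidableEq V] in
theorem Twins.swap (h : G.Twins v w) : G.Twins w v :=
  ⟨h.ne.symm, fun x => (h.row x).symm, by rw [← h.row, ← h.col]; exact h.loop, h.hw, h.hv⟩

omit [DecidableEq V] in
theorem Twins.mulVec_eq (h : G.Twins v w) (x : V → ZMod 2) :
    (G.adj *ᵥ x) v = (G.adj *ᵥ x) w := by
  simp only [Matrix.mulVec, dotProduct, h.row]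

/-- The indicator vector of `{v, w}`. -/
def pairVec (v w : V) : V → ZMod 2 := fun i => if i = v ∨ i = w then 1 else 0

/-- The indicator vector of a pair of twins lies in the kernel of the adjacency matrix, because
the columns of the twins coincide. -/
theorem Twins.mulVec_add (h : G.Twins v w) (x : V → ZMod 2) (c : ZMod 2) :
    G.adj *ᵥ (x + c • pairVec v w) = G.adj *ᵥ x := by
  have h0 : G.adj *ᵥ pairVec v w = 0 := by
    have hp : pairVec v w = Pi.single v 1 + Pi.single w 1 := by
      funext i
      by_cases hi : i = v
      · subst hi; simp [pairVec, h.ne]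
      · by_cases hj : i = w
        · subst hj; simp [pairVec, hi]
        · simp [pairVec, hi, hj]
    funext i
    rw [hp, Matrix.mulVec_add]
    simp [h.col, CharTwo.add_self_eq_zero]
  rw [Matrix.mulVec_add, Matrix.mulVec_smul, h0, smul_zero, add_zero]

/-- The conditions defining `kerOn` at the vertices other than `v` and `w`, which do not involve
`T ∩ {v, w}`. -/
def OffPair (G : WMG R V) (v w : V) (S : Finset V) (x : V → ZMod 2) : Prop :=
  ∀ i, i ≠ v → i ≠ w → if i ∈ G.marked ∧ G.adjT S i i = 0 then x i = 0
    else (G.adj *ᵥ x) i + (if i ∈ S then x i else 0) = 0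

theorem Twins.mem_kerOn (h : G.Twins v w) {A S T : Finset V} (hA : A ⊆ {v, w})
    (hT : ∀ i, i ≠ v → i ≠ w → (i ∈ T ↔ i ∈ S)) (x : V → ZMod 2) :
    x ∈ G.kerOn A T ↔ OffPair G v w S x ∧
      (if v ∈ A then x v = 0 else (G.adj *ᵥ x) v + (if v ∈ T then x v else 0) = 0) ∧
      (if w ∈ A then x w = 0 else (G.adj *ᵥ x) w + (if w ∈ T then x w else 0) = 0) := by
  have hoff : ∀ i, i ≠ v → i ≠ w →
      ((if i ∈ A ∨ (i ∈ G.marked ∧ G.adjT T i i = 0) then x i = 0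
        else (G.adj *ᵥ x) i + (if i ∈ T then x i else 0) = 0) ↔
      (if i ∈ G.marked ∧ G.adjT S i i = 0 then x i = 0
        else (G.adj *ᵥ x) i + (if i ∈ S then x i else 0) = 0)) := by
    intro i h1 h2
    have hiA : i ∉ A := fun hi => by simpa [h1, h2] using hA hi
    simp [hiA, hT i h1 h2, adjT]
  constructor
  · intro hx
    refine ⟨fun i h1 h2 => (hoff i h1 h2).1 (hx i), ?_, ?_⟩
    · simpa [h.hv] using hx v
    · simpa [h.hw] using hx w
  · rintro ⟨h1, h2, h3⟩ i
    by_cases hv : i = v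
    · subst hv; simpa [h.hv] using h2
    by_cases hw : i = w
    · subst hw; simpa [h.hw] using h3
    exact (hoff i hv hw).2 (h1 i hv hw)

theorem Twins.offPair_add (h : G.Twins v w) (S : Finset V) (x : V → ZMod 2) (c : ZMod 2) :
    OffPair G v w S (x + c • pairVec v w) ↔ OffPair G v w S x := by
  refine forall_congr' fun i => imp_congr_right fun h1 => imp_congr_right fun h2 => ?_
  rw [h.mulVec_add]
  simp [pairVec, h1, h2]

omit [Fintype V] in
theorem add_smul_pairVec_self (x : V → ZMod 2) (c : ZMod 2) :
    x + c • pairVec v w + c • pairVec v w = x := by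
  funext i
  simp only [Pi.add_apply]
  rw [add_assoc, CharTwo.add_self_eq_zero, add_zero]

theorem Twins.nullOn_insert (h : G.Twins v w) {S : Finset V} (hv : v ∉ S) (hw : w ∉ S) :
    G.nullOn ∅ (insert w S) = G.nullOn {w} S := by
  have : G.kerOn ∅ (insert w S) = G.kerOn {w} S := by
    ext x
    rw [h.mem_kerOn (by simp) (S := S) (by simp +contextual),
      h.mem_kerOn (by simp) (S := S) (by simp), ← h.mulVec_eq]
    simp only [Finset.notMem_empty, Finset.mem_insert, h.ne, hv, hw, Finset.mem_singleton,
      if_true, if_false, or_false, add_zero, or_self]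
    refine and_congr_right fun _ => and_congr_right fun h1 => ?_
    rw [h1, zero_add]
  rw [nullOn, this, nullOn]

theorem Twins.nullOn_empty (h : G.Twins v w) {S : Finset V} (hv : v ∉ S) (hw : w ∉ S) :
    G.nullOn ∅ S = G.nullOn {w} S + 1 := by
  have h1 : ∀ x, x ∈ G.kerOn ∅ S ↔ OffPair G v w S x ∧ (G.adj *ᵥ x) v = 0 := by
    intro x
    rw [h.mem_kerOn (by simp) (S := S) (by simp), ← h.mulVec_eq]
    simp [hv, hw]
  have h2 : ∀ x, x ∈ G.kerOn {w} S ↔ (OffPair G v w S x ∧ (G.adj *ᵥ x) v = 0) ∧ x w = 0 := by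
    intro x
    rw [h.mem_kerOn (by simp) (S := S) (by simp)]
    simp [hv, h.ne, and_assoc]
  have hp : pairVec v w w = 1 := by simp [pairVec]
  have e : G.kerOn ∅ S ≃ G.kerOn {w} S × ZMod 2 :=
    { toFun := fun x => (⟨x.1 + x.1 w • pairVec v w, (h2 _).2 ⟨by
          rw [h.offPair_add, h.mulVec_add]; exact (h1 _).1 x.2,
          by simp [hp, CharTwo.add_self_eq_zero]⟩⟩, x.1 w)
      invFun := fun y => ⟨y.1.1 + y.2 • pairVec v w, (h1 _).2 (by
          rw [h.offPair_add, h.mulVec_add]; exact ((h2 _).1 y.1.2).1)⟩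
      left_inv := fun x => Subtype.ext (add_smul_pairVec_self _ _)
      right_inv := fun y => by
        have hy : (y.1.1 + y.2 • pairVec v w) w = y.2 := by
          simp [hp, ((h2 _).1 y.1.2).2]
        refine Prod.ext (Subtype.ext ?_) hy
        change y.1.1 + y.2 • pairVec v w + (y.1.1 + y.2 • pairVec v w) w • pairVec v w = y.1.1
        rw [hy, add_smul_pairVec_self] }
  have hne : Nat.card (G.kerOn {w} S) ≠ 0 := by
    have : Nonempty (G.kerOn {w} S) := ⟨⟨0, fun i => by simp⟩⟩
    exact Nat.card_pos.ne'
  rw [nullOn, Nat.card_congr e, Nat.card_prod, Nat.card_zmod, Nat.log_mul_base one_lt_two hne,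
    nullOn]

theorem Twins.nullOn_insert_insert (h : G.Twins v w) {S : Finset V} :
    G.nullOn ∅ (insert v (insert w S)) = G.nullOn {v, w} S := by
  have h1 : ∀ x, x ∈ G.kerOn ∅ (insert v (insert w S)) ↔
      OffPair G v w S x ∧ x v = (G.adj *ᵥ x) v ∧ x w = (G.adj *ᵥ x) v := by
    intro x
    rw [h.mem_kerOn (by simp) (S := S) (by simp +contextual), ← h.mulVec_eq]
    simp [CharTwo.add_eq_zero, eq_comm]
  have h2 : ∀ x, x ∈ G.kerOn {v, w} S ↔ OffPair G v w S x ∧ x v = 0 ∧ x w = 0 := by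
    intro x
    rw [h.mem_kerOn (by simp) (S := S) (by simp)]
    simp
  have hpv : pairVec v w v = 1 := by simp [pairVec]
  have hpw : pairVec v w w = 1 := by simp [pairVec]
  rw [nullOn, nullOn]
  congr 1
  refine Nat.card_congr
    { toFun := fun x => ⟨x.1 + (G.adj *ᵥ x.1) v • pairVec v w, (h2 _).2 ?_⟩
      invFun := fun y => ⟨y.1 + (G.adj *ᵥ y.1) v • pairVec v w, (h1 _).2 ?_⟩
      left_inv := fun x => Subtype.ext ?_
      right_inv := fun y => Subtype.ext ?_ }
  · obtain ⟨a, b, c⟩ := (h1 _).1 x.2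
    rw [h.offPair_add]
    refine ⟨a, ?_, ?_⟩ <;> simp [hpv, hpw, b, c, CharTwo.add_self_eq_zero]
  · obtain ⟨a, b, c⟩ := (h2 _).1 y.2
    rw [h.offPair_add, h.mulVec_add]
    refine ⟨a, ?_, ?_⟩ <;> simp [hpv, hpw, b, c]
  · dsimp only
    rw [h.mulVec_add, add_smul_pairVec_self]
  · dsimp only
    rw [h.mulVec_add, add_smul_pairVec_self]

end Twins

end WMG

/-! ### The bracket of a graph with twins -/

theorem unmarked_nonadjacent_twins {R : Type*} [CommRing R] (d : Rˣ) {V : Type*} [Fintype V] [DecidableEq V]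
    (G : WMG R V) (v w : V) (hvw : v ≠ w)
    (hloopv : G.adj v v = 0) (hloopw : G.adj w w = 0)
    (htwin : ∀ x : V, x ≠ v → x ≠ w → G.adj v x = G.adj w x)
    (hmv : v ∉ G.marked) (hmw : w ∉ G.marked) (hadj : G.adj v w = 0)
    (G' : WMG R {x : V // x ∉ ({w} : Finset V)})
    (hadj' : G'.adj = (G.delete {w}).adj)
    (hphi' : G'.phi = G.phi)
    (hmarked' : ∀ x : {x : V // x ∉ ({w} : Finset V)}, x ∈ G'.marked ↔ (x : V) ∈ G.marked)
    (halpha' : ∀ x : {x : V // x ∉ ({w} : Finset V)}, G'.alpha x =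
        if (x : V) = v then G.alpha v * G.alpha w * (d : R) + G.alpha v * G.beta w + G.beta v * G.alpha w else G.alpha x)
    (hbeta' : ∀ x : {x : V // x ∉ ({w} : Finset V)}, G'.beta x =
        if (x : V) = v then (0 : R) else G.beta x) :
    G.bracket d = G'.bracket d + G.beta v * G.beta w * (G.delete {v, w}).bracket d := by
  have htw : G.Twins v w := by
    refine ⟨hvw, fun x => ?_, hloopv, hmv, hmw⟩
    by_cases h1 : x = v
    · subst h1; rw [hloopv, ← G.symm.apply, hadj]
    by_cases h2 : x = w
    · subst h2; rw [hloopw, hadj]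
    exact htwin x h1 h2
  have hm' : G'.marked = (G.delete {w}).marked := by
    ext x
    rw [hmarked', WMG.delete, Finset.mem_subtype]
  rw [WMG.bracket_of_delete d G {w} G'
      (fun x => if x = v then G.alpha v * G.alpha w * (d : R) + G.alpha v * G.beta w
        + G.beta v * G.alpha w else G.alpha x)
      (fun x => if x = v then 0 else G.beta x) hadj' hm' halpha' hbeta',
    WMG.bracket_of_delete d G {v, w} (G.delete {v, w}) G.alpha G.beta rfl rfl
      (fun _ => rfl) (fun _ => rfl), hphi', WMG.bracket]
  set E : Finset V := {v, w}ᶜ with hE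
  have hvE : v ∉ E := by simp [hE]
  have hwE : w ∉ E := by simp [hE]
  have hwc : ({w} : Finset V)ᶜ = insert v E := by
    ext x
    by_cases hx : x = v
    · subst hx; simp [hvw]
    · simp [hE, hx]
  have huniv : (Finset.univ : Finset (Finset V)) = (insert v (insert w E)).powerset := by
    rw [← Finset.powerset_univ]
    congr 1
    ext x
    by_cases h1 : x = v <;> by_cases h2 : x = w <;> simp [hE, h1, h2]
  have hvwE : v ∉ insert w E := by simp [hvw, hvE]
  rw [huniv, Finset.sum_powerset_insert hvwE, Finset.sum_powerset_insert hwE,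
    Finset.sum_powerset_insert hwE, hwc, Finset.sum_powerset_insert hvE]
  change (d : R) ^ G.phi * _ = (d : R) ^ G.phi * _ + _ * ((d : R) ^ G.phi * _)
  rw [mul_left_comm, ← mul_add, Finset.mul_sum]
  simp only [← Finset.sum_add_distrib]
  congr 1
  refine Finset.sum_congr rfl fun S hS => ?_
  rw [Finset.mem_powerset] at hS
  have hvS : v ∉ S := fun h => hvE (hS h)
  have hwS : w ∉ S := fun h => hwE (hS h)
  have hv1 : v ∉ insert w S := by simp [hvw, hvS]
  have hvD : v ∉ E \ S := fun h => hvE (Finset.sdiff_subset h)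
  have hwD : w ∉ E \ S := fun h => hwE (Finset.sdiff_subset h)
  have hvwD : v ∉ insert w (E \ S) := by simp [hvw, hvD]
  have hmem : ∀ x, x ∈ E ↔ x ≠ v ∧ x ≠ w := by simp [hE]
  -- The complements of the four sets `T` with `T \ {v, w} = S`.
  have c0 : Sᶜ = insert v (insert w (E \ S)) := by ext x; grind [Finset.mem_compl]
  have c1 : (insert w S)ᶜ = insert v (E \ S) := by ext x; grind [Finset.mem_compl]
  have c2 : (insert v S)ᶜ = insert w (E \ S) := by ext x; grind [Finset.mem_compl]
  have c3 : (insert v (insert w S))ᶜ = E \ S := by ext x; grind [Finset.mem_compl]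
  have c4 : insert v E \ S = insert v (E \ S) := by ext x; grind [Finset.mem_compl]
  have hnv : G.nullOn {v} S = G.nullOn {w} S := by
    have h1 := htw.nullOn_empty hvS hwS
    have h2 := htw.swap.nullOn_empty hwS hvS
    omega
  have hD : ∀ x ∈ E \ S, (if x = v then G.alpha v * G.alpha w * (d : R) + G.alpha v * G.beta w
      + G.beta v * G.alpha w else G.alpha x) = G.alpha x :=
    fun x hx => if_neg fun h : x = v => hvD (h ▸ hx)
  have hB : ∀ x ∈ S, (if x = v then (0 : R) else G.beta x) = G.beta x :=
    fun x hx => if_neg fun h : x = v => hvS (h ▸ hx)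
  simp only [WMG.nullity_eq_nullOn]
  rw [c0, c1, c2, c3, c4, htw.nullOn_empty hvS hwS, htw.nullOn_insert hvS hwS,
    htw.swap.nullOn_insert hwS hvS, htw.nullOn_insert_insert, hnv,
    Finset.prod_insert hvwD, Finset.prod_insert hwD, Finset.prod_insert hvD,
    Finset.prod_insert hvD, Finset.prod_insert hv1, Finset.prod_insert hwS,
    Finset.prod_insert hvS, Finset.prod_insert hvS, Finset.prod_congr rfl hD,
    Finset.prod_congr rfl hB, if_pos rfl, if_pos rfl]
  ring
end
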